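/- arXiv:math/0207027 — 2 statements merged into one kernel-verified Lean document; each statement's English description precedes it below -/
import Mathlib

section
/- Let Y be a length space such that there exists y ∈ Y with the property: for all r > 0 there exists R ≥ r such that the relative δ-covers B̃(y,r,R)^δ stabilize for all sufficiently small δ (i.e., there is δ₀ > 0 with B̃(y,r,R)^δ = B̃(y,r,R)^{δ₀} for all 0 < δ < δ₀). Then Y has a universal cover. -/
open Metric Set

/-- The length of a path, as the extended-real total variation of the map. -/
noncomputable def pathLength {X : Type*} [PseudoMetricSpace X] {x y : X} (γ : Path x y) :
    ENNReal :=
  eVariationOn (fun t => γ t) Set.univ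

/-- The induced (intrinsic) length pseudo-distance on a subset `A` of a metric space:
the infimum of lengths of continuous paths joining the two points and staying inside `A`. -/
noncomputable def intrinsicEDist {X : Type*} [PseudoMetricSpace X] (A : Set X) (x y : X) :
    ENNReal :=
  ⨅ (γ : Path x y) (_ : Set.range (fun t => γ t) ⊆ A), pathLength γ

/-- A metric space is a length space if its distance is the induced length metric. -/
def IsLengthSpace (X : Type*) [PseudoMetricSpace X] : Prop :=
  ∀ x y : X, edist x y = intrinsicEDist Set.univ x y

/-- A set `V` is evenly covered by `π` if its preimage is a disjoint union of open sets,
each mapped homeomorphically onto `V` by `π`. -/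
def EvenlyCovered {E X : Type*} [TopologicalSpace E] [TopologicalSpace X]
    (π : E → X) (V : Set X) : Prop :=
  ∃ (ι : Type) (W : ι → Set E), (∀ i, IsOpen (W i)) ∧
    Pairwise (Function.onFun Disjoint W) ∧ π ⁻¹' V = ⋃ i, W i ∧
    ∀ i, ∃ h : (W i) ≃ₜ V, ∀ w : W i, (h w : X) = π (w : E)

/-- `π : E → X` is a covering projection onto `X`. -/
def IsCoveringMapOnto {E X : Type*} [TopologicalSpace E] [TopologicalSpace X]
    (π : E → X) : Prop :=
  Function.Surjective π ∧ ∀ x : X, ∃ V : Set X, IsOpen V ∧ x ∈ V ∧ EvenlyCovered π V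

/-- `π : E → X` is a universal cover: it is a covering projection, and for any other
covering projection `π' : E' → X` there is a continuous map `f : E → E'` with `π' ∘ f = π`. -/
def IsUniversalCover {E X : Type*} [TopologicalSpace E] [TopologicalSpace X]
    (π : E → X) : Prop :=
  IsCoveringMapOnto π ∧ ∀ (E' : Type) [TopologicalSpace E'] (π' : E' → X),
    IsCoveringMapOnto π' → ∃ f : E → E', Continuous f ∧ π' ∘ f = π

/-- A covering space of the subset `A` of a metric space `Y`: a metric space `E` together
with a projection `π : E → Y` whose range is `A`, such that every point of `A` has a
neighborhood (in `A`) evenly covered by `π`. -/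
structure SetCover {Y : Type*} [MetricSpace Y] (A : Set Y) where
  E : Type
  [inst : MetricSpace E]
  π : E → Y
  range_eq : Set.range π = A
  evenly : ∀ x ∈ A, ∃ V : Set Y, IsOpen V ∧ x ∈ V ∧ EvenlyCovered π (V ∩ A)

attribute [instance] SetCover.inst

/-- A loop `γ` lifts closed through `π` if every lift of it is a closed path. -/
def LiftsClosed {E Y : Type*} [TopologicalSpace E] [TopologicalSpace Y]
    (π : E → Y) (γ : C(unitInterval, Y)) : Prop :=
  ∀ γ' : C(unitInterval, E), (∀ t, π (γ' t) = γ t) → γ' 0 = γ' 1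

/-- `γ` is a loop lying in `A`. -/
def IsLoopIn {Y : Type*} [TopologicalSpace Y] (A : Set Y) (γ : C(unitInterval, Y)) : Prop :=
  γ 0 = γ 1 ∧ ∀ t, γ t ∈ A

/-- `γ` lies in some open ball of radius `δ` centered in `A`. -/
def InSmallBall {Y : Type*} [MetricSpace Y] (A : Set Y) (δ : ℝ) (γ : C(unitInterval, Y)) :
    Prop :=
  ∃ c ∈ A, ∀ t, γ t ∈ Metric.ball c δ

/-- `γ` is null-homotopic through a homotopy staying in `A`. -/
def NullhomotopicIn {Y : Type*} [TopologicalSpace Y] (A : Set Y) (γ : C(unitInterval, Y)) :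
    Prop :=
  ∃ H : C(unitInterval × unitInterval, Y), (∀ s t, H (s, t) ∈ A) ∧
    (∀ t, H (0, t) = γ t) ∧ (∃ c, ∀ t, H (1, t) = c) ∧ ∀ s, H (s, 0) = H (s, 1)

/-- `C` is a relative `δ`-cover `B̃(y,r,R)^δ`: loops in `B(y,r)` lying in `δ`-balls of
`B(y,R)` lift closed, loops null-homotopic in `B(y,R)` lift closed, and `C` is maximal
(covers every other cover of `B(y,r)` with these two properties, in the sense of the
closed-lifting criterion). -/
def IsRelDeltaCover {Y : Type*} [MetricSpace Y] (y : Y) (r R δ : ℝ)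
    (C : SetCover (Metric.closedBall y r)) : Prop :=
  (∀ γ : C(unitInterval, Y), IsLoopIn (Metric.closedBall y r) γ →
      InSmallBall (Metric.closedBall y R) δ γ → LiftsClosed C.π γ) ∧
  (∀ γ : C(unitInterval, Y), IsLoopIn (Metric.closedBall y r) γ →
      NullhomotopicIn (Metric.closedBall y R) γ → LiftsClosed C.π γ) ∧
  ∀ C' : SetCover (Metric.closedBall y r),
    (∀ γ : C(unitInterval, Y), IsLoopIn (Metric.closedBall y r) γ →
        InSmallBall (Metric.closedBall y R) δ γ → LiftsClosed C'.π γ) →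
    (∀ γ : C(unitInterval, Y), IsLoopIn (Metric.closedBall y r) γ →
        NullhomotopicIn (Metric.closedBall y R) γ → LiftsClosed C'.π γ) →
    ∀ γ : C(unitInterval, Y), IsLoopIn (Metric.closedBall y r) γ →
      LiftsClosed C.π γ → LiftsClosed C'.π γ

/-- The group of deck transformations of a cover: isometric self-equivalences commuting
with the projection. -/
def Deck {Y : Type*} [MetricSpace Y] {A : Set Y} (C : SetCover A) :
    Subgroup (C.E ≃ᵢ C.E) where
  carrier := {g | ∀ e, C.π (g e) = C.π e}
  mul_mem' := by
    intro a b ha hb e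
    show C.π (a (b e)) = C.π e
    rw [ha, hb]
  one_mem' := fun e => rfl
  inv_mem' := by
    intro g hg e
    have h1 : g (g⁻¹ e) = e := by
      show g (g.symm e) = e
      simp
    have h2 := hg (g⁻¹ e)
    rw [h1] at h2
    exact h2.symm

/-!
A loop in a small ball around `x` lifts closed to the relative `δ₀`-cover `C` of a ball around `y`
containing that small ball. As `C` is also the relative `δ`-cover for every smaller `δ`, maximality
shows that the loop lifts closed to every covering of `Y`: by compactness of `closedBall y R` there
is a `δ` for which loops in `δ`-balls lift closed to the given covering. The competitors in the
maximality property are metric spaces, so the covering has to be metrized first. Thus every point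
of `Y` has a neighborhood whose loops lift closed to all coverings at once.

A universal cover is then obtained from paths starting at `y`, two paths with the same endpoint
being identified if they have the same monodromy in every covering. The fundamental groupoid acts on
the resulting fibers, and a set-valued functor on the fundamental groupoid is the monodromy of a
covering as soon as loops in small neighborhoods act trivially. This cover maps to any other
covering by letting the path classes act on a point over `y`.
-/

open Filter Topology

section EvenlyCovered

variable {E X : Type*} [TopologicalSpace E] [TopologicalSpace X] {π : E → X} {V : Set X}

theorem isEvenlyCovered_of_sheets {ι : Type*} [TopologicalSpace ι] [DiscreteTopology ι]
    {W : ι → Set E} (hWo : ∀ i, IsOpen (W i)) (hWd : Pairwise (Function.onFun Disjoint W))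
    (hWV : π ⁻¹' V = ⋃ i, W i) (h : ∀ i, W i ≃ₜ V) (hπ : ∀ i (w : W i), (h i w : X) = π w)
    (hV : IsOpen V) {x : X} (hx : x ∈ V) : IsEvenlyCovered π x ι := by
  have hW_sub (i : ι) : W i ⊆ π ⁻¹' V := hWV ▸ subset_iUnion W i
  let K (p : V × ι) : π ⁻¹' V := ⟨(h p.2).symm p.1, hW_sub _ (Subtype.prop _)⟩
  have hπK (p : V × ι) : π (K p) = p.1 := by rw [← hπ, Homeomorph.apply_symm_apply]
  have hK_cont : Continuous K := continuous_prod_of_discrete_right.2 fun i ↦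
    (continuous_subtype_val.comp (h i).symm.continuous).subtype_mk _
  have hK_open : IsOpenMap K := isOpenMap_prod_of_discrete_right.2 fun i ↦
    ((hWo i).isOpenMap_subtype_val.comp (h i).symm.isOpenMap).subtype_mk _
  have hK_bij : K.Bijective := by
    refine ⟨fun p q hpq ↦ ?_, fun ⟨e, he⟩ ↦ ?_⟩
    · have hfst : p.1 = q.1 := Subtype.ext (by rw [← hπK, hpq, hπK])
      have hsnd : p.2 = q.2 := by
        by_contra hne
        refine (hWd hne).ne_of_mem (Subtype.prop _) (Subtype.prop _) (congrArg Subtype.val hpq)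
      exact Prod.ext hfst hsnd
    · obtain ⟨i, hi⟩ := mem_iUnion.1 (hWV ▸ he)
      exact ⟨(h i ⟨e, hi⟩, i), Subtype.ext (by simp [K])⟩
  let H : V × ι ≃ₜ π ⁻¹' V :=
    (Equiv.ofBijective K hK_bij).toHomeomorphOfContinuousOpen hK_cont hK_open
  refine ⟨inferInstance, V, hx, hV, hWV ▸ isOpen_iUnion hWo, H.symm, fun e ↦ ?_⟩
  obtain ⟨p, rfl⟩ := H.surjective e
  rw [H.symm_apply_apply]
  exact (hπK p).symm

theorem EvenlyCovered.exists_isEvenlyCovered (h : EvenlyCovered π V) (hV : IsOpen V) {x : X}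
    (hx : x ∈ V) : ∃ (ι : Type) (_ : TopologicalSpace ι), IsEvenlyCovered π x ι := by
  obtain ⟨ι, W, hWo, hWd, hWV, hW⟩ := h
  choose f hf using hW
  let _ : TopologicalSpace ι := ⊥
  have : DiscreteTopology ι := ⟨rfl⟩
  exact ⟨ι, _, isEvenlyCovered_of_sheets hWo hWd hWV f hf hV hx⟩

theorem evenlyCovered_of_homeomorph_prod {E : Type} [TopologicalSpace E] {π : E → X} {I : Type}
    [TopologicalSpace I] [DiscreteTopology I] (hV : IsOpen (π ⁻¹' V)) (H : π ⁻¹' V ≃ₜ V × I)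
    (hH : ∀ e, ((H e).1 : X) = π e) : EvenlyCovered π V := by
  let S (i : I) : Set (π ⁻¹' V) := {e | (H e).2 = i}
  have hS (i : I) : IsOpen (S i) :=
    (isOpen_discrete {i}).preimage (continuous_snd.comp H.continuous)
  have hmem {i : I} {e : π ⁻¹' V} : (e : E) ∈ Subtype.val '' S i ↔ (H e).2 = i :=
    Subtype.val_injective.mem_set_image
  refine ⟨I, fun i ↦ Subtype.val '' S i, fun i ↦ hV.isOpenMap_subtype_val _ (hS i), ?_, ?_,
    fun i ↦ ?_⟩
  · refine fun i j hij ↦ (disjoint_image_iff Subtype.val_injective).2 ?_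
    exact Set.disjoint_left.2 fun e hi hj ↦ hij (hi.symm.trans hj)
  · have hS_univ : ⋃ i, S i = univ := iUnion_eq_univ_iff.2 fun e ↦ ⟨(H e).2, rfl⟩
    rw [← image_iUnion, hS_univ, image_univ, Subtype.range_coe]
  · have hsub : Subtype.val '' S i ⊆ π ⁻¹' V := Subtype.coe_image_subset _ _
    have hsymm (v : V) : ((H.symm (v, i) : π ⁻¹' V) : E) ∈ Subtype.val '' S i :=
      hmem.2 (by rw [H.apply_symm_apply])
    refine ⟨⟨⟨fun w ↦ (H ⟨w, hsub w.2⟩).1, fun v ↦ ⟨_, hsymm v⟩, fun w ↦ ?_, fun v ↦ ?_⟩, ?_, ?_⟩,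
      fun w ↦ hH _⟩
    · have hw : (H ⟨w, hsub w.2⟩).2 = i := hmem.1 w.2
      simp [← hw]
    · simp
    · fun_prop
    · fun_prop

theorem EvenlyCovered.restrict (h : EvenlyCovered π V) (A : Set X) :
    EvenlyCovered (fun e : π ⁻¹' A ↦ π e) (V ∩ A) := by
  obtain ⟨ι, W, hWo, hWd, hWV, hW⟩ := h
  refine ⟨ι, fun i ↦ Subtype.val ⁻¹' W i, fun i ↦ (hWo i).preimage continuous_subtype_val,
    fun i j hij ↦ (hWd hij).preimage _, ?_, fun i ↦ ?_⟩
  · rw [← preimage_iUnion, ← hWV]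
    ext e
    exact and_iff_left e.2
  · obtain ⟨f, hf⟩ := hW i
    have hA (x : ↥(V ∩ A)) : π (f.symm ⟨x, x.2.1⟩) ∈ A := by
      rw [← hf, f.apply_symm_apply]; exact x.2.2
    refine ⟨⟨⟨fun e ↦ ⟨f ⟨e.1, e.2⟩, Subtype.prop _, (hf ⟨e.1, e.2⟩).symm ▸ e.1.2⟩,
      fun x ↦ ⟨⟨f.symm ⟨x, x.2.1⟩, hA x⟩, (f.symm _).2⟩, fun e ↦ ?_, fun x ↦ ?_⟩, ?_, ?_⟩,
      fun e ↦ hf ⟨e.1, e.2⟩⟩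
    · simp
    · simp
    · fun_prop
    · fun_prop

end EvenlyCovered

section IsCoveringMap

variable {E X : Type*} [TopologicalSpace E] [TopologicalSpace X] {π : E → X}

theorem IsCoveringMapOnto.isCoveringMap (h : IsCoveringMapOnto π) : IsCoveringMap π := fun x ↦ by
  obtain ⟨V, hV, hx, hVπ⟩ := h.2 x
  obtain ⟨ι, _, hι⟩ := hVπ.exists_isEvenlyCovered hV hx
  exact hι.to_isEvenlyCovered_preimage

theorem isCoveringMapOnto_of_isCoveringMap {E : Type} [TopologicalSpace E] {π : E → X}
    (cov : IsCoveringMap π) (hπ : π.Surjective) : IsCoveringMapOnto π := by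
  refine ⟨hπ, fun x ↦ ?_⟩
  obtain ⟨_, V, hx, hV, hVπ, H, hH⟩ := cov x
  exact ⟨V, hV, hx, evenlyCovered_of_homeomorph_prod hVπ H hH⟩

theorem surjective_of_isCoveringMap [PathConnectedSpace X] [Nonempty E] (cov : IsCoveringMap π) :
    π.Surjective := fun x ↦ by
  obtain ⟨e⟩ := ‹Nonempty E›
  obtain ⟨γ⟩ := PathConnectedSpace.joined (π e) x
  exact ⟨_, (cov.monodromy (.mk γ) ⟨e, rfl⟩).2⟩

theorem exists_nhds_forall_isPreconnected_subset (cov : IsCoveringMap π) {e : E} {O : Set E}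
    (hO : O ∈ 𝓝 e) : ∃ V ∈ 𝓝 (π e), ∀ S : Set E, IsPreconnected S → e ∈ S → π '' S ⊆ V →
      S ⊆ O := by
  obtain ⟨φ, heφ, rfl⟩ := cov.isLocalHomeomorph e
  refine ⟨φ '' (φ.source ∩ interior O), ?_, fun S hS heS hSV ↦ ?_⟩
  · exact φ.image_mem_nhds heφ (inter_mem (φ.open_source.mem_nhds heφ) (interior_mem_nhds.2 hO))
  · have hmaps : MapsTo φ S (φ '' (φ.source ∩ interior O)) := mapsTo_iff_image_subset.2 hSV
    have hsub : φ '' (φ.source ∩ interior O) ⊆ φ.target :=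
      (image_mono inter_subset_left).trans φ.image_source_eq_target.subset
    have hid : EqOn id (φ.symm ∘ φ) S := cov.eqOn_of_comp_eqOn hS continuousOn_id
      (φ.continuousOn_symm.comp cov.continuous.continuousOn (hmaps.mono_right hsub))
      (fun s hs ↦ (φ.right_inv (hsub (hmaps hs))).symm) heS (φ.left_inv heφ).symm
    intro s hs
    obtain ⟨o, ⟨hoφ, hoO⟩, ho⟩ := hmaps hs
    have : s = o := by simpa [← ho, φ.left_inv hoφ] using hid hs
    exact this ▸ interior_subset hoO

end IsCoveringMap

section Metrizable

variable {E X : Type*}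

/-- An extended pseudo-distance on a covering space `π : E → X` of a locally connected metric space,
inducing the topology of `E`: the infimum of the diameters of the projections to `X` of connected
sets containing both points. -/
noncomputable def coverEDist [TopologicalSpace E] [PseudoEMetricSpace X] (π : E → X) (a b : E) :
    ENNReal :=
  ⨅ (S : Set E) (_ : IsPreconnected S ∧ a ∈ S ∧ b ∈ S), ediam (π '' S)

variable [TopologicalSpace E]

section PseudoEMetric

variable [PseudoEMetricSpace X] {π : E → X}

theorem coverEDist_lt_iff {a b : E} {ε : ENNReal} :
    coverEDist π a b < ε ↔ ∃ S, (IsPreconnected S ∧ a ∈ S ∧ b ∈ S) ∧ ediam (π '' S) < ε := by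
  simp only [coverEDist, iInf_lt_iff, exists_prop]

theorem coverEDist_self (a : E) : coverEDist π a a = 0 := by
  refine nonpos_iff_eq_zero.1 (iInf₂_le_of_le {a} ⟨isPreconnected_singleton, rfl, rfl⟩ ?_)
  rw [image_singleton, ediam_singleton]

theorem coverEDist_comm (a b : E) : coverEDist π a b = coverEDist π b a := by
  simp only [coverEDist, and_comm (a := a ∈ _)]

theorem coverEDist_triangle (a b c : E) :
    coverEDist π a c ≤ coverEDist π a b + coverEDist π b c := by
  simp only [coverEDist, ENNReal.iInf_add, ENNReal.add_iInf, le_iInf_iff]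
  rintro T ⟨hT, hbT, hcT⟩ S ⟨hS, haS, hbS⟩
  refine (iInf₂_le (S ∪ T) ⟨hS.union b hbS hbT hT, .inl haS, .inr hcT⟩).trans ?_
  rw [image_union]
  exact ediam_union_le ⟨π b, mem_image_of_mem π hbS, mem_image_of_mem π hbT⟩

theorem eventually_coverEDist_lt [LocallyConnectedSpace X] (cov : IsCoveringMap π) (e : E)
    {ε : ENNReal} (hε : 0 < ε) : ∀ᶠ b in 𝓝 e, coverEDist π b e < ε := by
  obtain ⟨δ, hδ, hδε⟩ := exists_between hε
  obtain ⟨φ, heφ, rfl⟩ := cov.isLocalHomeomorph e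
  have hball : φ.target ∩ eball (φ e) (δ / 2) ∈ 𝓝 (φ e) :=
    inter_mem (φ.open_target.mem_nhds (φ.map_source heφ))
      (eball_mem_nhds _ (ENNReal.half_pos hδ.ne'))
  obtain ⟨V, ⟨hVo, heV, hVc⟩, hV⟩ :=
    (LocallyConnectedSpace.open_connected_basis (φ e)).mem_iff.1 hball
  have hVt : V ⊆ φ.target := hV.trans inter_subset_left
  have heS : e ∈ φ.symm '' V := ⟨φ e, heV, φ.left_inv heφ⟩
  have hS_open : IsOpen (φ.symm '' V) := φ.symm.isOpen_image_of_subset_source hVo hVt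
  filter_upwards [hS_open.mem_nhds heS] with b hbS
  refine coverEDist_lt_iff.2
    ⟨_, ⟨hVc.isPreconnected.image _ (φ.continuousOn_symm.mono hVt), hbS, heS⟩, ?_⟩
  calc ediam (φ '' (φ.symm '' V)) = ediam V :=
        congrArg ediam (φ.toPartialEquiv.image_symm_image_of_subset_target hVt)
    _ ≤ ediam (eball (φ e) (δ / 2)) := ediam_mono (hV.trans inter_subset_right)
    _ ≤ 2 * (δ / 2) := ediam_eball_le
    _ < ε := by rwa [ENNReal.mul_div_cancel two_ne_zero ENNReal.ofNat_ne_top]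

theorem nhds_hasBasis_coverEDist [LocallyConnectedSpace X] (cov : IsCoveringMap π) (e : E) :
    (𝓝 e).HasBasis (fun ε : ENNReal ↦ 0 < ε) fun ε ↦ {b | coverEDist π b e < ε} := by
  refine ⟨fun O ↦ ⟨fun hO ↦ ?_,
    fun ⟨ε, hε, hεO⟩ ↦ mem_of_superset (eventually_coverEDist_lt cov e hε) hεO⟩⟩
  obtain ⟨V, hV, hVO⟩ := exists_nhds_forall_isPreconnected_subset cov hO
  obtain ⟨ε, hε, hεV⟩ := Metric.nhds_basis_eball.mem_iff.1 hV
  refine ⟨ε, hε, fun b hb ↦ ?_⟩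
  obtain ⟨S, ⟨hS, hbS, heS⟩, hSε⟩ := coverEDist_lt_iff.1 hb
  refine hVO S hS heS ?_ hbS
  rintro _ ⟨s, hs, rfl⟩
  exact hεV <| (edist_le_ediam_of_mem (mem_image_of_mem π hs) (mem_image_of_mem π heS)).trans_lt hSε

end PseudoEMetric

theorem t2Space_of_isCoveringMap [TopologicalSpace X] [T2Space X] {π : E → X}
    (cov : IsCoveringMap π) : T2Space E := by
  refine ⟨fun a b hab ↦ ?_⟩
  by_cases hπ : π a = π b
  · exact cov.isSeparatedMap a b hπ hab
  · exact separated_by_continuous cov.continuous hπ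

theorem metrizableSpace_of_isCoveringMap [TopologicalSpace X] [TopologicalSpace.MetrizableSpace X]
    [LocallyConnectedSpace X] {π : E → X} (cov : IsCoveringMap π) :
    TopologicalSpace.MetrizableSpace E := by
  let _ : MetricSpace X := TopologicalSpace.metrizableSpaceMetric X
  let D : PseudoEMetricSpace E :=
    { edist := coverEDist π
      edist_self := coverEDist_self
      edist_comm := coverEDist_comm
      edist_triangle := coverEDist_triangle }
  have hD : D.toUniformSpace.toTopologicalSpace = ‹TopologicalSpace E› :=
    TopologicalSpace.ext_nhds fun e ↦
      Metric.nhds_basis_eball.eq_of_same_basis (nhds_hasBasis_coverEDist cov e)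
  have hps : TopologicalSpace.PseudoMetrizableSpace E := hD ▸ UniformSpace.pseudoMetrizableSpace
  have : T2Space E := t2Space_of_isCoveringMap cov
  infer_instance

end Metrizable

section Loops

variable {E X : Type*} [TopologicalSpace E]

theorem liftsClosed_restrict_iff [TopologicalSpace X] {π : E → X} {A : Set X}
    {γ : C(unitInterval, X)} (hγ : ∀ t, γ t ∈ A) :
    LiftsClosed (fun e : π ⁻¹' A ↦ π e) γ ↔ LiftsClosed π γ := by
  refine ⟨fun h Γ hΓ ↦ ?_, fun h Γ hΓ ↦ Subtype.ext (h ⟨fun t ↦ Γ t, by fun_prop⟩ hΓ)⟩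
  have hΓA (t) : Γ t ∈ π ⁻¹' A := by rw [mem_preimage, hΓ]; exact hγ t
  exact congrArg Subtype.val (h ⟨fun t ↦ ⟨Γ t, hΓA t⟩, by fun_prop⟩ hΓ)

theorem exists_isOpen_forall_isLoopIn_liftsClosed [TopologicalSpace X] {π : E → X}
    (cov : IsCoveringMap π) (x : X) :
    ∃ U, IsOpen U ∧ x ∈ U ∧ ∀ γ, IsLoopIn U γ → LiftsClosed π γ := by
  obtain ⟨_, U, hxU, hU, -, H, hH⟩ := cov x
  refine ⟨U, hU, hxU, fun γ ⟨hγ, hγU⟩ Γ hΓ ↦ ?_⟩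
  let Γ' (t : unitInterval) : π ⁻¹' U := ⟨Γ t, by rw [mem_preimage, hΓ]; exact hγU t⟩
  have hΓ' : Continuous Γ' := by fun_prop
  have hfst : (H (Γ' 0)).1 = (H (Γ' 1)).1 := Subtype.ext (by simp only [hH, Γ', hΓ, hγ])
  have hsnd : (H (Γ' 0)).2 = (H (Γ' 1)).2 :=
    PreconnectedSpace.constant inferInstance (continuous_snd.comp (H.continuous.comp hΓ'))
  exact congrArg Subtype.val (H.injective (Prod.ext hfst hsnd))

theorem exists_pos_forall_inSmallBall_liftsClosed [MetricSpace X] {π : E → X}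
    (cov : IsCoveringMap π) {K : Set X} (hK : IsCompact K) :
    ∃ δ > 0, ∀ γ : C(unitInterval, X), γ 0 = γ 1 → InSmallBall K δ γ → LiftsClosed π γ := by
  choose U hU hxU hlift using exists_isOpen_forall_isLoopIn_liftsClosed cov
  obtain ⟨δ, hδ, hleb⟩ := lebesgue_number_lemma_of_metric hK hU
    fun x _ ↦ mem_iUnion.2 ⟨x, hxU x⟩
  refine ⟨δ, hδ, fun γ hγ ⟨c, hc, hγc⟩ ↦ ?_⟩
  obtain ⟨x, hx⟩ := hleb c hc
  exact hlift x γ ⟨hγ, fun t ↦ hx (hγc t)⟩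

theorem NullhomotopicIn.liftsClosed [TopologicalSpace X] {π : E → X} (cov : IsCoveringMap π)
    {A : Set X} {γ : C(unitInterval, X)} (h : NullhomotopicIn A γ) : LiftsClosed π γ := by
  intro Γ hΓ
  obtain ⟨H, -, hH0, ⟨c, hH1⟩, hH_loop⟩ := h
  have hstart (t) : H (0, t) = π (Γ t) := by rw [hH0, hΓ]
  let G := cov.liftHomotopy H Γ hstart
  have hπG (p) : π (G p) = H p := congr_fun (cov.liftHomotopy_lifts H Γ hstart) p
  have hG0 (t) : G (0, t) = Γ t := cov.liftHomotopy_zero H Γ hstart t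
  have hG1 : G (1, 0) = G (1, 1) :=
    cov.const_of_comp (g := fun t ↦ G (1, t)) (by fun_prop) (by simp only [hπG, hH1, implies_true])
      0 1
  have hG_loop : (fun s ↦ G (s, 0)) = fun s ↦ G (s, 1) :=
    cov.eq_of_comp_eq (by fun_prop) (by fun_prop)
      (funext fun s ↦ by simp only [Function.comp_apply, hπG, hH_loop]) 1 hG1
  simpa only [hG0] using congr_fun hG_loop 0

end Loops

section Stabilization

open TopologicalSpace

/-- The restriction of a covering of a metric space `Y` to the preimage of `A`, as a covering
space of `A`; its metric is an arbitrary one inducing the topology. -/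
noncomputable def SetCover.restrict {Y : Type*} [MetricSpace Y] {E : Type} [TopologicalSpace E]
    [MetrizableSpace E] {π : E → Y} (h : IsCoveringMapOnto π) (A : Set Y) : SetCover A where
  E := π ⁻¹' A
  inst := metrizableSpaceMetric _
  π e := π e
  range_eq := by rw [← Function.comp_def, range_comp, Subtype.range_coe, image_preimage_eq A h.1]
  evenly x _ := by
    obtain ⟨V, hV, hx, hVπ⟩ := h.2 x
    exact ⟨V, hV, hx, hVπ.restrict A⟩

/-- Every loop in `U` lifts to closed paths in every covering space of `X`. Neighborhoods with this
property replace the relatively simply connected ones in the construction of a universal cover. -/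
def LoopsLiftClosed {X : Type*} [TopologicalSpace X] (U : Set X) : Prop :=
  ∀ γ, IsLoopIn U γ → ∀ (E : Type) [TopologicalSpace E] (π : E → X), IsCoveringMap π →
    LiftsClosed π γ

variable {Y : Type*} [MetricSpace Y] {y : Y} {r R δ δ₀ : ℝ} {C : SetCover (closedBall y r)}

theorem InSmallBall.mono {A : Set Y} {γ : C(unitInterval, Y)} (h : InSmallBall A δ γ)
    (hδ : δ ≤ δ₀) : InSmallBall A δ₀ γ := by
  obtain ⟨c, hc, hγ⟩ := h
  exact ⟨c, hc, fun t ↦ ball_subset_ball hδ (hγ t)⟩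

-- Maximality is applied with `δ` a Lebesgue number of a cover of `closedBall y R` by open sets
-- evenly covered by `π`.
theorem liftsClosed_of_forall_isRelDeltaCover [ProperSpace Y] [LocallyConnectedSpace Y]
    (hδ₀ : 0 < δ₀) (hC : ∀ δ, 0 < δ → δ < δ₀ → IsRelDeltaCover y r R δ C)
    {γ : C(unitInterval, Y)} (hγ : IsLoopIn (closedBall y r) γ) (hCγ : LiftsClosed C.π γ)
    {E : Type} [TopologicalSpace E] {π : E → Y} (h : IsCoveringMapOnto π) : LiftsClosed π γ := by
  have cov := h.isCoveringMap
  have := metrizableSpace_of_isCoveringMap cov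
  obtain ⟨δ₁, hδ₁, hleb⟩ :=
    exists_pos_forall_inSmallBall_liftsClosed cov (isCompact_closedBall y R)
  have hδ : min δ₁ (δ₀ / 2) < δ₀ := (min_le_right _ _).trans_lt (half_lt_self hδ₀)
  obtain ⟨-, -, hmax⟩ := hC _ (lt_min hδ₁ (half_pos hδ₀)) hδ
  refine (liftsClosed_restrict_iff hγ.2).1 (hmax (.restrict h _) ?_ ?_ γ hγ hCγ)
  · exact fun σ hσ hσδ ↦ (liftsClosed_restrict_iff hσ.2).2
      (hleb σ hσ.1 (hσδ.mono (min_le_left _ _)))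
  · exact fun σ hσ hσ_null ↦ (liftsClosed_restrict_iff hσ.2).2 (hσ_null.liftsClosed cov)

theorem exists_mem_nhds_loopsLiftClosed [ProperSpace Y] [PathConnectedSpace Y]
    [LocallyConnectedSpace Y] (y : Y)
    (hstab : ∀ r > 0, ∃ R ≥ r, ∃ δ₀ > 0, ∃ C : SetCover (closedBall y r),
      IsRelDeltaCover y r R δ₀ C ∧ ∀ δ, 0 < δ → δ < δ₀ → IsRelDeltaCover y r R δ C) (x : Y) :
    ∃ U ∈ 𝓝 x, LoopsLiftClosed U := by
  obtain ⟨R, hR, δ₀, hδ₀, C, hC₀, hC⟩ := hstab (dist x y + 1) (by positivity)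
  refine ⟨ball x (min 1 δ₀), ball_mem_nhds x (by positivity), fun γ hγ E _ π cov Γ hΓ ↦ ?_⟩
  have : Nonempty E := ⟨Γ 0⟩
  have hγr : IsLoopIn (closedBall y (dist x y + 1)) γ := by
    refine ⟨hγ.1, fun t ↦ ?_⟩
    have : dist (γ t) x < 1 := (hγ.2 t).trans_le (min_le_left _ _)
    rw [mem_closedBall]
    linarith [dist_triangle (γ t) x y]
  have hγδ : InSmallBall (closedBall y R) δ₀ γ :=
    ⟨x, by rw [mem_closedBall]; linarith, fun t ↦ ball_subset_ball (min_le_right _ _) (hγ.2 t)⟩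
  exact liftsClosed_of_forall_isRelDeltaCover hδ₀ hC hγr (hC₀.1 γ hγr hγδ)
    (isCoveringMapOnto_of_isCoveringMap cov (surjective_of_isCoveringMap cov)) Γ hΓ

end Stabilization

section Transport

open CategoryTheory

variable {X : Type*} [TopologicalSpace X] {F : FundamentalGroupoid X ⥤ Type*}

/-- The action of a path on a functor on the fundamental groupoid. -/
def transport (F : FundamentalGroupoid X ⥤ Type*) {x x' : X} (σ : Path x x') :
    F.obj ⟨x⟩ → F.obj ⟨x'⟩ :=
  F.map (X := ⟨x⟩) (Y := ⟨x'⟩) (Path.Homotopic.Quotient.mk σ)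

theorem transport_refl {x : X} (a : F.obj ⟨x⟩) : transport F (.refl x) a = a :=
  F.map_id_apply _ a

theorem transport_trans {x x' x'' : X} (σ : Path x x') (τ : Path x' x'') (a : F.obj ⟨x⟩) :
    transport F (σ.trans τ) a = transport F τ (transport F σ a) :=
  F.map_comp_apply (X := ⟨x⟩) (Y := ⟨x'⟩) (Z := ⟨x''⟩) (Path.Homotopic.Quotient.mk σ)
    (Path.Homotopic.Quotient.mk τ) a

theorem transport_symm_transport {x x' : X} (σ : Path x x') (a : F.obj ⟨x⟩) :
    transport F σ.symm (transport F σ a) = a := by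
  rw [← transport_trans, transport, Path.Homotopic.Quotient.mk_trans,
    Path.Homotopic.Quotient.mk_symm, Path.Homotopic.Quotient.trans_symm]
  exact F.map_id_apply _ a

theorem transport_transport_symm {x x' : X} (σ : Path x x') (a : F.obj ⟨x'⟩) :
    transport F σ (transport F σ.symm a) = a := by
  simpa only [Path.symm_symm] using transport_symm_transport σ.symm a

/-- Every loop in `U` acts trivially on the functor `F`, which makes the covering space with
monodromy `F` trivial over `U`. -/
def TransportTrivialOn (F : FundamentalGroupoid X ⥤ Type*) (U : Set X) : Prop :=
  ∀ (x : X) (σ : Path x x), range σ ⊆ U → ∀ a, transport F σ a = a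

theorem TransportTrivialOn.mono {U V : Set X} (hU : TransportTrivialOn F U) (hVU : V ⊆ U) :
    TransportTrivialOn F V :=
  fun x σ hσ ↦ hU x σ (hσ.trans hVU)

theorem TransportTrivialOn.transport_eq {U : Set X} (hU : TransportTrivialOn F U) {x x' : X}
    {σ τ : Path x x'} (hσ : range σ ⊆ U) (hτ : range τ ⊆ U) (a : F.obj ⟨x⟩) :
    transport F σ a = transport F τ a := by
  have hloop : transport F (σ.trans τ.symm) a = a :=
    hU x _ (by rw [Path.trans_range, Path.symm_range]; exact union_subset hσ hτ) a
  calc transport F σ a = transport F τ (transport F τ.symm (transport F σ a)) :=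
        (transport_transport_symm τ _).symm
    _ = transport F τ a := by rw [← transport_trans σ, hloop]

/-- The covering space of `X` with monodromy `F`. Its fiber over `x` is the set `F x`, and the
points near `a` are the transports of `a` along paths in small neighborhoods of `x`. -/
structure TransportSpace (F : FundamentalGroupoid X ⥤ Type*) where
  /-- The covering projection. -/
  proj : X
  /-- The position in the fiber. -/
  val : F.obj ⟨proj⟩

namespace TransportSpace

/-- The sheet through `p` over `U`, swept out by transporting `p` along the paths in `U`. -/
def sheet (p : TransportSpace F) (U : Set X) : Set (TransportSpace F) :=
  {q | ∃ σ : Path p.proj q.proj, range σ ⊆ U ∧ transport F σ p.val = q.val}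

variable {p q : TransportSpace F} {U V : Set X}

theorem mem_sheet_self (hp : p.proj ∈ U) : p ∈ sheet p U :=
  ⟨.refl _, by rwa [Path.refl_range, singleton_subset_iff], transport_refl _⟩

theorem proj_mem_of_mem_sheet (hq : q ∈ sheet p U) : q.proj ∈ U := by
  obtain ⟨σ, hσ, -⟩ := hq
  exact hσ σ.target_mem_range

theorem sheet_mono (hUV : U ⊆ V) : sheet p U ⊆ sheet p V :=
  fun _ ⟨σ, hσ, hq⟩ ↦ ⟨σ, hσ.trans hUV, hq⟩

theorem sheet_subset_of_mem (hq : q ∈ sheet p U) : sheet q U ⊆ sheet p U := by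
  rintro z ⟨τ, hτ, hz⟩
  obtain ⟨σ, hσ, hpq⟩ := hq
  exact ⟨σ.trans τ, by rw [Path.trans_range]; exact union_subset hσ hτ,
    by rw [transport_trans, hpq, hz]⟩

instance : TopologicalSpace (TransportSpace F) where
  IsOpen O := ∀ p ∈ O, ∃ U ∈ 𝓝 p.proj, sheet p U ⊆ O
  isOpen_univ _ _ := ⟨univ, univ_mem, subset_univ _⟩
  isOpen_inter O O' hO hO' p hp := by
    obtain ⟨U, hU, hUO⟩ := hO p hp.1
    obtain ⟨U', hU', hUO'⟩ := hO' p hp.2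
    exact ⟨U ∩ U', inter_mem hU hU', subset_inter ((sheet_mono inter_subset_left).trans hUO)
      ((sheet_mono inter_subset_right).trans hUO')⟩
  isOpen_sUnion 𝒪 h𝒪 p := by
    rintro ⟨O, hO, hp⟩
    obtain ⟨U, hU, hUO⟩ := h𝒪 O hO p hp
    exact ⟨U, hU, hUO.trans (subset_sUnion_of_mem hO)⟩

theorem isOpen_sheet (p : TransportSpace F) (hU : IsOpen U) : IsOpen (sheet p U) := fun _ hq ↦
  ⟨U, hU.mem_nhds (proj_mem_of_mem_sheet hq), sheet_subset_of_mem hq⟩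

theorem nhds_hasBasis_sheet (p : TransportSpace F) :
    (𝓝 p).HasBasis (fun U ↦ U ∈ 𝓝 p.proj) (sheet p) := by
  refine ⟨fun O ↦ ⟨fun hO ↦ ?_, fun ⟨U, hU, hUO⟩ ↦ ?_⟩⟩
  · obtain ⟨O', hO'O, hO', hp⟩ := mem_nhds_iff.1 hO
    obtain ⟨U, hU, hUO'⟩ := hO' p hp
    exact ⟨U, hU, hUO'.trans hO'O⟩
  · exact mem_of_superset ((isOpen_sheet p isOpen_interior).mem_nhds
      (mem_sheet_self (mem_interior_iff_mem_nhds.2 hU))) ((sheet_mono interior_subset).trans hUO)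

theorem continuous_proj : Continuous (proj : TransportSpace F → X) :=
  continuous_iff_continuousAt.2 fun p ↦ ((nhds_hasBasis_sheet p).tendsto_iff (basis_sets _)).2
    fun U hU ↦ ⟨U, hU, fun _ ↦ proj_mem_of_mem_sheet⟩

theorem surjOn_proj_sheet (hV : IsPathConnected V) (hp : p.proj ∈ V) :
    SurjOn proj (sheet p V) V := fun x hx ↦ by
  have hσ := hV.joinedIn _ hp x hx
  exact ⟨⟨x, transport F hσ.somePath p.val⟩,
    ⟨hσ.somePath, range_subset_iff.2 hσ.somePath_mem, rfl⟩, rfl⟩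

theorem isOpenMap_proj [LocallyPathConnectedSpace X] :
    IsOpenMap (proj : TransportSpace F → X) := by
  refine isOpenMap_iff_nhds_le.2 fun p ↦ ((nhds_hasBasis_sheet p).map _).ge_iff.2 fun U hU ↦ ?_
  obtain ⟨V, ⟨hV, hVc⟩, hVU⟩ := (path_connected_basis p.proj).mem_iff.1 hU
  exact mem_of_superset hV ((surjOn_proj_sheet hVc (mem_of_mem_nhds hV)).trans
    (image_mono (sheet_mono hVU)))

theorem injOn_proj_sheet (hV : TransportTrivialOn F V) : InjOn proj (sheet p V) := by
  rintro ⟨x, a⟩ ⟨σ, hσ, ha⟩ ⟨_, b⟩ ⟨τ, hτ, hb⟩ rfl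
  exact congrArg (mk x) (ha.symm.trans ((hV.transport_eq hσ hτ p.val).trans hb))

theorem pairwise_disjoint_sheet (hV : TransportTrivialOn F V) (x : X) :
    Pairwise (Function.onFun Disjoint fun a : F.obj ⟨x⟩ ↦ sheet ⟨x, a⟩ V) := by
  refine fun a b hab ↦ Set.disjoint_left.2 fun q ⟨σ, hσ, ha⟩ ⟨τ, hτ, hb⟩ ↦ hab ?_
  rw [← transport_symm_transport σ a, ← transport_symm_transport σ b]
  exact congrArg _ (ha.trans (hb.symm.trans (hV.transport_eq hτ hσ b)))

theorem preimage_proj_eq_iUnion_sheet (hV : IsPathConnected V) {x : X} (hx : x ∈ V) :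
    (proj ⁻¹' V : Set (TransportSpace F)) = ⋃ a : F.obj ⟨x⟩, sheet ⟨x, a⟩ V := by
  refine Subset.antisymm (fun q hq ↦ ?_) (iUnion_subset fun a q ↦ proj_mem_of_mem_sheet)
  have hσ := hV.joinedIn x hx q.proj hq
  exact mem_iUnion.2 ⟨transport F hσ.somePath.symm q.val, hσ.somePath,
    range_subset_iff.2 hσ.somePath_mem, transport_transport_symm _ _⟩

/-- The covering projection as a homeomorphism from a sheet over `V` onto `V`. -/
noncomputable def sheetHomeomorph [LocallyPathConnectedSpace X] (hV : IsOpen V)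
    (hVc : IsPathConnected V) (hV_triv : TransportTrivialOn F V) (hp : p.proj ∈ V) :
    sheet p V ≃ₜ V :=
  (BijOn.equiv proj
    ⟨fun _ ↦ proj_mem_of_mem_sheet, injOn_proj_sheet hV_triv, surjOn_proj_sheet hVc hp⟩
    ).toHomeomorphOfContinuousOpen
    ((continuous_proj.comp continuous_subtype_val).subtype_mk _)
    ((isOpenMap_proj.comp (isOpen_sheet p hV).isOpenMap_subtype_val).subtype_mk _)

theorem isCoveringMap_proj [LocallyPathConnectedSpace X]
    (hF : ∀ x, ∃ U ∈ 𝓝 x, TransportTrivialOn F U) :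
    IsCoveringMap (proj : TransportSpace F → X) := fun x ↦ by
  obtain ⟨U, hU, hF_U⟩ := hF x
  obtain ⟨V, ⟨hV, hxV, hVc⟩, hVU⟩ : ∃ V, (IsOpen V ∧ x ∈ V ∧ IsPathConnected V) ∧ V ⊆ U :=
    ⟨_, ⟨isOpen_interior.pathComponentIn x,
      mem_pathComponentIn_self (mem_interior_iff_mem_nhds.2 hU),
      isPathConnected_pathComponentIn (mem_interior_iff_mem_nhds.2 hU)⟩,
      pathComponentIn_subset.trans interior_subset⟩
  have hF_V := hF_U.mono hVU
  let _ : TopologicalSpace (F.obj ⟨x⟩) := ⊥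
  have : DiscreteTopology (F.obj ⟨x⟩) := ⟨rfl⟩
  exact (isEvenlyCovered_of_sheets (fun a ↦ isOpen_sheet ⟨x, a⟩ hV) (pairwise_disjoint_sheet hF_V x)
    (preimage_proj_eq_iUnion_sheet hVc hxV) (fun a ↦ sheetHomeomorph hV hVc hF_V hxV)
    (fun a w ↦ rfl) hV hxV).to_isEvenlyCovered_preimage

theorem continuous_of_monodromy {E : Type*} [TopologicalSpace E] {π : E → X}
    (cov : IsCoveringMap π) (η : ∀ x, F.obj ⟨x⟩ → π ⁻¹' {x})
    (hη : ∀ {x x'} (σ : Path x x') a, η x' (transport F σ a) = cov.monodromy (.mk σ) (η x a)) :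
    Continuous fun p : TransportSpace F ↦ (η p.proj p.val : E) := by
  refine continuous_iff_continuousAt.2 fun p ↦
    ((nhds_hasBasis_sheet p).tendsto_iff (basis_sets _)).2 fun O hO ↦ ?_
  obtain ⟨V, hV, hVO⟩ := exists_nhds_forall_isPreconnected_subset cov hO
  refine ⟨V, (η p.proj p.val).2 ▸ hV, fun q ⟨σ, hσ, hq⟩ ↦ ?_⟩
  let Γ := cov.liftPath σ (η p.proj p.val) (σ.source.trans (η p.proj p.val).2.symm)
  have hΓ_start : Γ 0 = η p.proj p.val := cov.liftPath_zero ..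
  have hΓ_end : Γ 1 = η q.proj q.val := by rw [← hq, hη]; rfl
  have hπΓ : π '' range Γ ⊆ V := by rwa [← range_comp, cov.liftPath_lifts]
  exact hVO (range Γ) (isPreconnected_range Γ.continuous) ⟨0, hΓ_start⟩ hπΓ ⟨1, hΓ_end⟩

end TransportSpace

end Transport

section UniversalFunctor

open CategoryTheory

variable {X : Type*} [TopologicalSpace X]

/-- Homotopy classes of paths are identified if they have the same monodromy in every covering
space of `X`. -/
def monodromySetoid (y x : X) : Setoid (Path.Homotopic.Quotient y x) where
  r γ γ' := ∀ (E : Type) [TopologicalSpace E] (π : E → X) (cov : IsCoveringMap π),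
    cov.monodromy γ = cov.monodromy γ'
  iseqv :=
    { refl _ _ _ _ _ := rfl
      symm h E _ π cov := (h E π cov).symm
      trans h h' E _ π cov := (h E π cov).trans (h' E π cov) }

theorem monodromySetoid_trans {y x x' : X} {γ γ' : Path.Homotopic.Quotient y x}
    (h : monodromySetoid y x γ γ') (σ : Path.Homotopic.Quotient x x') :
    monodromySetoid y x' (γ.trans σ) (γ'.trans σ) := fun E _ π cov ↦ by
  ext1 e
  rw [cov.monodromy_trans_apply, cov.monodromy_trans_apply, h E π cov]

/-- The functor on the fundamental groupoid whose value at `x` consists of the paths from `y` to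
`x` up to equality of monodromy in every covering space. It is the monodromy of the universal
cover. -/
noncomputable def universalFunctor (y : X) : FundamentalGroupoid X ⥤ Type _ where
  obj x := Quotient (monodromySetoid y x.as)
  map σ := ↾(Quotient.map (·.trans σ) fun _ _ h ↦ monodromySetoid_trans h σ)
  map_id x := by
    ext ⟨γ⟩
    exact congrArg (Quotient.mk _) (Path.Homotopic.Quotient.trans_refl γ)
  map_comp σ τ := by
    ext ⟨γ⟩
    exact congrArg (Quotient.mk _) (Path.Homotopic.Quotient.trans_assoc γ σ τ).symm

variable {y x x' : X}

theorem LoopsLiftClosed.monodromy_mk {U : Set X} (hU : LoopsLiftClosed U) {σ : Path x x}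
    (hσ : range σ ⊆ U) {E : Type} [TopologicalSpace E] {π : E → X} (cov : IsCoveringMap π)
    (e : π ⁻¹' {x}) : cov.monodromy (.mk σ) e = e := by
  have hloop : IsLoopIn U (σ : C(unitInterval, X)) :=
    ⟨σ.source.trans σ.target.symm, range_subset_iff.1 hσ⟩
  have hstart : σ 0 = π e := σ.source.trans e.2.symm
  have hΓ := hU σ hloop E π cov (cov.liftPath σ e hstart)
    (congr_fun (cov.liftPath_lifts σ e hstart))
  exact Subtype.ext (hΓ.symm.trans (cov.liftPath_zero σ e hstart))

theorem LoopsLiftClosed.transportTrivialOn {U : Set X} (hU : LoopsLiftClosed U) (y : X) :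
    TransportTrivialOn (universalFunctor y) U := by
  rintro x σ hσ ⟨γ⟩
  refine Quotient.sound fun E _ π cov ↦ funext fun e ↦ ?_
  rw [cov.monodromy_trans_apply, hU.monodromy_mk hσ cov]

/-- The comparison map from the fiber at `x` of the universal cover to the fiber of the covering
`π`, sending the base point to `e`. -/
noncomputable def universalFiberMap {E : Type} [TopologicalSpace E] {π : E → X}
    (cov : IsCoveringMap π) (e : π ⁻¹' {y}) (x : X) :
    (universalFunctor y).obj ⟨x⟩ → π ⁻¹' {x} :=
  Quotient.lift (cov.monodromy · e) fun _ _ h ↦ congr_fun (h E π cov) e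

theorem universalFiberMap_transport {E : Type} [TopologicalSpace E] {π : E → X}
    (cov : IsCoveringMap π) (e : π ⁻¹' {y}) (σ : Path x x') (a : (universalFunctor y).obj ⟨x⟩) :
    universalFiberMap cov e x' (transport (universalFunctor y) σ a) =
      cov.monodromy (.mk σ) (universalFiberMap cov e x a) := by
  obtain ⟨γ⟩ := a
  exact cov.monodromy_trans_apply ..

theorem exists_continuous_transportSpace_universalFunctor {E : Type} [TopologicalSpace E]
    {π : E → X} (cov : IsCoveringMap π) (hπ : π.Surjective) (y : X) :
    ∃ f : TransportSpace (universalFunctor y) → E, Continuous f ∧ π ∘ f = TransportSpace.proj := by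
  obtain ⟨e, he⟩ := hπ y
  exact ⟨_, TransportSpace.continuous_of_monodromy cov (universalFiberMap cov ⟨e, he⟩)
    (universalFiberMap_transport cov ⟨e, he⟩), funext fun p ↦ (universalFiberMap cov _ _ p.val).2⟩

instance small_transportSpace_universalFunctor [Small.{0} X] :
    Small.{0} (TransportSpace (universalFunctor y)) := by
  have : Small.{0} (Σ x, Path y x) := by
    refine small_of_injective (β := unitInterval → X) (f := fun γ ↦ γ.2) ?_
    rintro ⟨x, γ⟩ ⟨x', γ'⟩ (h : ⇑γ = γ')
    obtain rfl : x = x' := by rw [← γ.target, h, γ'.target]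
    obtain rfl : γ = γ' := Path.ext h
    rfl
  refine small_of_surjective (α := Σ x, Path y x)
    (f := fun γ ↦ ⟨γ.1, Quotient.mk _ (.mk γ.2)⟩) ?_
  rintro ⟨x, ⟨⟨γ⟩⟩⟩
  exact ⟨⟨x, γ⟩, rfl⟩

end UniversalFunctor

theorem exists_isUniversalCover_of_loopsLiftClosed {X : Type*} [TopologicalSpace X]
    [PathConnectedSpace X] [LocallyPathConnectedSpace X] [Small.{0} X]
    (hX : ∀ x : X, ∃ U ∈ 𝓝 x, LoopsLiftClosed U) :
    ∃ (E : Type) (i : TopologicalSpace E) (π : E → X), @IsUniversalCover E X i _ π := by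
  obtain ⟨y⟩ := (inferInstance : Nonempty X)
  let F := universalFunctor y
  have cov : IsCoveringMap (TransportSpace.proj : TransportSpace F → X) :=
    TransportSpace.isCoveringMap_proj fun x ↦ by
      obtain ⟨U, hU, hlift⟩ := hX x
      exact ⟨U, hU, hlift.transportTrivialOn y⟩
  let H := Shrink.homeomorph (TransportSpace F)
  have : Nonempty (Shrink (TransportSpace F)) := ⟨H ⟨y, Quotient.mk _ (.refl y)⟩⟩
  have covH := cov.comp_homeomorph H.symm
  refine ⟨Shrink (TransportSpace F), inferInstance, TransportSpace.proj ∘ H.symm,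
    isCoveringMapOnto_of_isCoveringMap covH (surjective_of_isCoveringMap covH), fun E' _ π' h ↦ ?_⟩
  obtain ⟨f, hf, hπf⟩ :=
    exists_continuous_transportSpace_universalFunctor h.isCoveringMap h.1 y
  exact ⟨f ∘ H.symm, hf.comp H.symm.continuous, by rw [← hπf, Function.comp_assoc]⟩

section LengthSpace

variable {Y : Type*}

theorem IsLengthSpace.exists_path_subset_ball [PseudoMetricSpace Y] (hY : IsLengthSpace Y)
    {x z : Y} {ε : ℝ} (hz : z ∈ ball x ε) : ∃ σ : Path x z, range σ ⊆ ball x ε := by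
  have hlt : intrinsicEDist univ x z < .ofReal ε := by
    rwa [← hY, edist_comm, edist_lt_ofReal]
  simp only [intrinsicEDist, iInf_lt_iff] at hlt
  obtain ⟨σ, -, hσ⟩ := hlt
  refine ⟨σ, range_subset_iff.2 fun t ↦ ?_⟩
  have hle := eVariationOn.edist_le σ (mem_univ t) (mem_univ 0)
  rw [σ.source] at hle
  exact edist_lt_ofReal.1 (hle.trans_lt hσ)

theorem IsLengthSpace.isPathConnected_ball [PseudoMetricSpace Y] (hY : IsLengthSpace Y) (x : Y)
    {ε : ℝ} (hε : 0 < ε) : IsPathConnected (ball x ε) := by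
  refine ⟨x, mem_ball_self hε, fun {z} hz ↦ ?_⟩
  obtain ⟨σ, hσ⟩ := hY.exists_path_subset_ball hz
  exact ⟨σ, range_subset_iff.1 hσ⟩

theorem IsLengthSpace.pathConnectedSpace [PseudoMetricSpace Y] (hY : IsLengthSpace Y)
    (hne : Nonempty Y) : PathConnectedSpace Y := by
  refine ⟨hne, fun x z ↦ ?_⟩
  obtain ⟨σ, -⟩ := hY.exists_path_subset_ball (mem_ball.2 (lt_add_one (dist z x)))
  exact ⟨σ⟩

theorem IsLengthSpace.locallyPathConnectedSpace [PseudoMetricSpace Y] (hY : IsLengthSpace Y) :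
    LocallyPathConnectedSpace Y :=
  .of_bases (fun _ ↦ nhds_basis_ball) fun x _ hε ↦ hY.isPathConnected_ball x hε

end LengthSpace

theorem small_of_secondCountable_metric (X : Type*) [MetricSpace X] [SecondCountableTopology X] :
    Small.{0} X := by
  obtain ⟨f, hf⟩ := KuratowskiEmbedding.exists_isometric_embedding X
  exact small_of_injective hf.injective

theorem universalCover_exists_of_relDeltaCover_stabilization_general
    {Y : Type*} [MetricSpace Y] [PathConnectedSpace Y] [LocallyPathConnectedSpace Y] [ProperSpace Y]
    (y : Y)
    (hstab : ∀ r > 0, ∃ R ≥ r, ∃ δ₀ > 0, ∃ C : SetCover (Metric.closedBall y r),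
      IsRelDeltaCover y r R δ₀ C ∧ ∀ δ, 0 < δ → δ < δ₀ → IsRelDeltaCover y r R δ C) :
    ∃ (E : Type) (i : TopologicalSpace E) (π : E → Y), @IsUniversalCover E Y i _ π := by
  have := small_of_secondCountable_metric Y
  exact exists_isUniversalCover_of_loopsLiftClosed (exists_mem_nhds_loopsLiftClosed y hstab)

/-- If a (proper) length space `Y` has a point `y` such that for every
`r > 0` there is `R ≥ r` for which the relative `δ`-covers `B̃(y,r,R)^δ` stabilize for
all sufficiently small `δ` (the same cover is the relative `δ`-cover for all
`0 < δ < δ₀`), then `Y` has a universal cover. -/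
theorem universalCover_exists_of_relDeltaCover_stabilization
    {Y : Type*} [MetricSpace Y] (hY : IsLengthSpace Y) [ProperSpace Y]
    (y : Y)
    (hstab : ∀ r > 0, ∃ R ≥ r, ∃ δ₀ > 0, ∃ C : SetCover (Metric.closedBall y r),
      IsRelDeltaCover y r R δ₀ C ∧ ∀ δ, 0 < δ → δ < δ₀ → IsRelDeltaCover y r R δ C) :
    ∃ (E : Type) (i : TopologicalSpace E) (π : E → Y), @IsUniversalCover E Y i _ π := by
  have := hY.pathConnectedSpace ⟨y⟩
  have := hY.locallyPathConnectedSpace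
  exact universalCover_exists_of_relDeltaCover_stabilization_general y hstab
end

section
/- The following two definitions of pointed Gromov-Hausdorff convergence of complete length spaces (M_i, p_i) to (Y, y) are equivalent: (Definition A) for all R > 0, the closed balls (B(p_i,R), d_{M_i}) with restricted metrics converge in Gromov-Hausdorff distance to (B(y,R), d_Y); (Definition B) for all R > 0, there exist R_i → R such that the closed balls (B(p_i,R_i)) with their intrinsic (induced length) metrics converge in Gromov-Hausdorff distance to (B(y,R)) with its intrinsic metric. -/
open Metric Set

/-- An `ε`-Hausdorff approximation from `A ⊆ X` to `B ⊆ Y` with respect to the restricted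
(ambient) metrics. -/
def RestrictedHA {X Y : Type*} [MetricSpace X] [MetricSpace Y] (ε : ℝ)
    (A : Set X) (B : Set Y) (f : X → Y) : Prop :=
  Set.MapsTo f A B ∧ (∀ b ∈ B, ∃ a ∈ A, dist (f a) b ≤ ε) ∧
    ∀ a₁ ∈ A, ∀ a₂ ∈ A, |dist (f a₁) (f a₂) - dist a₁ a₂| ≤ ε

/-- An `ε`-Hausdorff approximation from `A ⊆ X` to `B ⊆ Y` with respect to the intrinsic
(induced length) metrics of `A` and `B`. -/
def IntrinsicHA {X Y : Type*} [MetricSpace X] [MetricSpace Y] (ε : ℝ)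
    (A : Set X) (B : Set Y) (f : X → Y) : Prop :=
  Set.MapsTo f A B ∧ (∀ b ∈ B, ∃ a ∈ A, intrinsicEDist B (f a) b ≤ ENNReal.ofReal ε) ∧
    ∀ a₁ ∈ A, ∀ a₂ ∈ A,
      intrinsicEDist A a₁ a₂ ≤ intrinsicEDist B (f a₁) (f a₂) + ENNReal.ofReal ε ∧
      intrinsicEDist B (f a₁) (f a₂) ≤ intrinsicEDist A a₁ a₂ + ENNReal.ofReal ε

/-- A bundled pointed metric space. -/
structure PointedMetricSpace where
  carrier : Type
  inst : MetricSpace carrier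
  pt : carrier

attribute [instance] PointedMetricSpace.inst

/-- Pointed Gromov-Hausdorff convergence: for every radius `R` and every `ε > 0`,
eventually there are pointed `ε`-Hausdorff approximations between the closed `R`-balls
around the basepoints, with respect to the restricted metrics. -/
def ConvergesPGH (X : ℕ → PointedMetricSpace) (Y : PointedMetricSpace) : Prop :=
  ∀ R > 0, ∀ ε > 0, ∃ N : ℕ, ∀ i ≥ N, ∃ f : (X i).carrier → Y.carrier,
    f (X i).pt = Y.pt ∧
    RestrictedHA ε (Metric.closedBall (X i).pt R) (Metric.closedBall Y.pt R) f

/-- Pointed Gromov–Hausdorff convergence via balls with intrinsic metrics: for every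
`R > 0` there are radii `R_i → R` such that the closed balls `B(p_i,R_i)` with their
intrinsic metrics converge to `B(y,R)` with its intrinsic metric. -/
def ConvergesPGHIntrinsic (X : ℕ → PointedMetricSpace) (Y : PointedMetricSpace) : Prop :=
  ∀ R > 0, ∃ Ri : ℕ → ℝ, Filter.Tendsto Ri Filter.atTop (nhds R) ∧
    ∀ ε > 0, ∃ N : ℕ, ∀ i ≥ N, ∃ f : (X i).carrier → Y.carrier,
      f (X i).pt = Y.pt ∧
      IntrinsicHA ε (Metric.closedBall (X i).pt (Ri i)) (Metric.closedBall Y.pt R) f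

/-!
Proper length spaces are geodesic, so pushing points along geodesics towards the center moves a
ball `B(p, R)` onto `B(p, r)` at intrinsic cost at most `R - r`. Both kinds of approximations of
balls are therefore equivalent to approximations in the sense of Burago–Burago–Ivanov, which are
insensitive to the boundary: such a map, composed with a push, lands in the target ball, and
conversely both metrics agree well inside the ball.

To compare intrinsic distances under a map distorting distances by at most `e`, cut an almost
shortest path into `n` pieces and join the images of the division points inside a slightly larger
ball; the length grows by at most `n * e`. The enlarged ball is harmless in the proper limit space,
because intrinsic distances in `B(y, R')` between points of `B(y, r)` with `r < R` converge
uniformly to those in `B(y, R)` as `R'` decreases to `R` (Arzelà–Ascoli). In the spaces `X i`,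
where no such uniformity is available, it is absorbed by the choice of `R_i > R`.
-/

open Filter Topology
open scoped NNReal ENNReal unitInterval

section IntrinsicDistance

variable {X : Type*} [PseudoMetricSpace X] {A : Set X} {x y z : X}

lemma intrinsicEDist_le_pathLength (γ : Path x y) (hγ : ∀ t, γ t ∈ A) :
    intrinsicEDist A x y ≤ pathLength γ :=
  iInf₂_le γ (range_subset_iff.2 hγ)

lemma intrinsicEDist_lt_iff {c : ℝ≥0∞} :
    intrinsicEDist A x y < c ↔ ∃ γ : Path x y, (∀ t, γ t ∈ A) ∧ pathLength γ < c := by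
  simp only [intrinsicEDist, iInf_lt_iff, exists_prop, range_subset_iff]

lemma edist_apply_le_pathLength (γ : Path x y) (s t : I) : edist (γ s) (γ t) ≤ pathLength γ :=
  eVariationOn.edist_le (fun t => γ t) (mem_univ s) (mem_univ t)

lemma edist_le_intrinsicEDist : edist x y ≤ intrinsicEDist A x y :=
  le_iInf₂ fun γ _ => by
    simpa only [γ.source, γ.target] using edist_apply_le_pathLength γ 0 1

lemma intrinsicEDist_self (hx : x ∈ A) : intrinsicEDist A x x = 0 := by
  have h_const : pathLength (Path.refl x) = 0 :=
    eVariationOn.constant_on (by rintro _ ⟨_, _, rfl⟩ _ ⟨_, _, rfl⟩; rfl)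
  exact nonpos_iff_eq_zero.1
    (h_const ▸ intrinsicEDist_le_pathLength (Path.refl x) fun _ => hx)

lemma dist_le_of_intrinsicEDist_le {c : ℝ} (hc : 0 ≤ c)
    (h : intrinsicEDist A x y ≤ ENNReal.ofReal c) : dist x y ≤ c :=
  (edist_le_ofReal hc).1 (edist_le_intrinsicEDist.trans h)

lemma pathLength_symm_le (γ : Path x y) : pathLength γ.symm ≤ pathLength γ :=
  eVariationOn.comp_le_of_antitoneOn (fun t => γ t) unitInterval.symm
    (fun _ _ _ _ h => unitInterval.symm_le_symm.2 h) (mapsTo_univ _ _)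

lemma intrinsicEDist_comm : intrinsicEDist A x y = intrinsicEDist A y x := by
  have h_le : ∀ u v : X, intrinsicEDist A u v ≤ intrinsicEDist A v u := fun u v =>
    le_iInf₂ fun γ hγ => (intrinsicEDist_le_pathLength γ.symm fun t =>
      range_subset_iff.1 hγ (unitInterval.symm t)).trans (pathLength_symm_le γ)
  exact le_antisymm (h_le x y) (h_le y x)

lemma pathLength_trans_le (γ : Path x y) (γ' : Path y z) :
    pathLength (γ.trans γ') ≤ pathLength γ + pathLength γ' := by
  let m : I := ⟨1 / 2, by norm_num, by norm_num⟩
  have h_first : EqOn (γ.trans γ') (γ ∘ fun t : I => projIcc (0 : ℝ) 1 zero_le_one (2 * t))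
      (Iic m) := fun t ht => if_pos (show (t : ℝ) ≤ 1 / 2 from ht)
  have h_second : EqOn (γ.trans γ') (γ' ∘ fun t : I => projIcc (0 : ℝ) 1 zero_le_one (2 * t - 1))
      (Ici m) := by
    rintro t (ht : (1 / 2 : ℝ) ≤ t)
    rcases ht.eq_or_lt with h | h
    · simp [Path.trans, ← h]
    · exact if_neg (not_le.2 h)
  calc pathLength (γ.trans γ')
      = eVariationOn (γ.trans γ') (Iic m ∪ Ici m) := by rw [Iic_union_Ici]; rfl
    _ = eVariationOn (γ.trans γ') (Iic m) + eVariationOn (γ.trans γ') (Ici m) :=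
        eVariationOn.union _ isGreatest_Iic isLeast_Ici
    _ ≤ pathLength γ + pathLength γ' := by
        rw [eVariationOn.congr h_first, eVariationOn.congr h_second]
        refine add_le_add (eVariationOn.comp_le_of_monotoneOn _ _ ?_ (mapsTo_univ _ _))
          (eVariationOn.comp_le_of_monotoneOn _ _ ?_ (mapsTo_univ _ _))
        · exact fun s _ t _ hst => monotone_projIcc _ (by have : (s : ℝ) ≤ t := hst; linarith)
        · exact fun s _ t _ hst => monotone_projIcc _ (by have : (s : ℝ) ≤ t := hst; linarith)

lemma intrinsicEDist_triangle :
    intrinsicEDist A x z ≤ intrinsicEDist A x y + intrinsicEDist A y z := by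
  refine ENNReal.le_of_forall_pos_le_add fun ε hε h_lt_top => ?_
  obtain ⟨hxy, hyz⟩ := ENNReal.add_lt_top.1 h_lt_top
  have hε' : (ε / 2 : ℝ≥0∞) ≠ 0 := by simpa using hε.ne'
  obtain ⟨γ, hγA, hγ⟩ := intrinsicEDist_lt_iff.1 (ENNReal.lt_add_right hxy.ne hε')
  obtain ⟨γ', hγA', hγ'⟩ := intrinsicEDist_lt_iff.1 (ENNReal.lt_add_right hyz.ne hε')
  have h_mem : ∀ t, γ.trans γ' t ∈ A := fun t => by
    rw [Path.trans_apply]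
    split_ifs
    exacts [hγA _, hγA' _]
  calc intrinsicEDist A x z
      ≤ pathLength (γ.trans γ') := intrinsicEDist_le_pathLength _ h_mem
    _ ≤ pathLength γ + pathLength γ' := pathLength_trans_le γ γ'
    _ ≤ intrinsicEDist A x y + ε / 2 + (intrinsicEDist A y z + ε / 2) :=
        add_le_add hγ.le hγ'.le
    _ = intrinsicEDist A x y + intrinsicEDist A y z + ε := by
        rw [add_add_add_comm, ENNReal.add_halves]

lemma intrinsicEDist_le_sum {u : ℕ → X} (hu : u 0 ∈ A) (n : ℕ) :
    intrinsicEDist A (u 0) (u n) ≤ ∑ k ∈ Finset.range n, intrinsicEDist A (u k) (u (k + 1)) := by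
  induction n with
  | zero => exact (intrinsicEDist_self hu).trans_le zero_le
  | succ n ih =>
    rw [Finset.sum_range_succ]
    exact intrinsicEDist_triangle.trans (add_le_add_left ih _)

lemma intrinsicEDist_le_add_two_mul {x' z' : X} {s : ℝ}
    (hx : intrinsicEDist A x x' ≤ ENNReal.ofReal s)
    (hz : intrinsicEDist A z z' ≤ ENNReal.ofReal s) :
    intrinsicEDist A x z ≤ intrinsicEDist A x' z' + ENNReal.ofReal (2 * s) := by
  calc intrinsicEDist A x z
      ≤ intrinsicEDist A x x' + (intrinsicEDist A x' z' + intrinsicEDist A z' z) :=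
        intrinsicEDist_triangle.trans (add_le_add_right intrinsicEDist_triangle _)
    _ ≤ ENNReal.ofReal s + (intrinsicEDist A x' z' + ENNReal.ofReal s) := by
        rw [intrinsicEDist_comm (x := z')]
        gcongr
    _ = intrinsicEDist A x' z' + ENNReal.ofReal (2 * s) := by
        rw [ENNReal.ofReal_mul zero_le_two, ENNReal.ofReal_ofNat]
        ring

end IntrinsicDistance

section LipschitzPaths

lemma pathLength_le_of_lipschitzWith {X : Type*} [PseudoMetricSpace X] {x y : X} {γ : Path x y}
    {K : ℝ≥0} (hγ : LipschitzWith K γ) : pathLength γ ≤ K := by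
  have h_id : eVariationOn (id : I → I) univ ≤ 1 := by
    have h := ((Subtype.mono_coe (· ∈ I)).monotoneOn univ).eVariationOn_eq
      (mem_univ (0 : I)) (mem_univ (1 : I))
    rw [univ_inter, show Icc (0 : I) 1 = univ from Icc_bot_top] at h
    exact h.le.trans (by simp)
  calc pathLength γ = eVariationOn (γ ∘ id) univ := rfl
    _ ≤ K * eVariationOn (id : I → I) univ :=
        (hγ.lipschitzOnWith (s := univ)).comp_eVariationOn_le (mapsTo_univ _ _)
    _ ≤ K := mul_le_of_le_one_right' h_id

lemma lipschitzWith_subpath {X : Type*} [PseudoMetricSpace X] {x y : X} {γ : Path x y}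
    {K : ℝ≥0} (hγ : LipschitzWith K γ) (s t : I) :
    LipschitzWith (K * nndist s t) (γ.subpath s t) := by
  refine hγ.comp (LipschitzWith.of_dist_le_mul fun a b => ?_)
  simp only [Subtype.dist_eq, Icc.coe_convexComb, coe_nndist, Real.dist_eq]
  rw [← abs_mul, ← abs_neg (_ * _)]
  exact le_of_eq (by ring_nf)

lemma mem_closedBall_target_of_lipschitzWith {X : Type*} [PseudoMetricSpace X] {x y : X}
    {γ : Path x y} {K : ℝ≥0} (hγ : LipschitzWith K γ) (t : I) : γ t ∈ closedBall y K :=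
  calc dist (γ t) y = dist (γ t) (γ 1) := by rw [γ.target]
    _ ≤ K * dist t 1 := hγ.dist_le_mul t 1
    _ ≤ K := mul_le_of_le_one_right K.2 (Real.dist_le_of_mem_Icc_01 t.2 unitInterval.one_mem)

lemma intrinsicEDist_le_mul_edist {X : Type*} [PseudoMetricSpace X] {A : Set X} {x y : X}
    {γ : Path x y} {K : ℝ≥0} (hγ : LipschitzWith K γ) (hA : ∀ t, γ t ∈ A) (s t : I) :
    intrinsicEDist A (γ s) (γ t) ≤ K * edist s t := by
  calc intrinsicEDist A (γ s) (γ t) ≤ pathLength (γ.subpath s t) :=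
        intrinsicEDist_le_pathLength _ fun _ => hA _
    _ ≤ (K * nndist s t : ℝ≥0) := pathLength_le_of_lipschitzWith (lipschitzWith_subpath hγ s t)
    _ = K * edist s t := by rw [ENNReal.coe_mul, edist_nndist]

lemma dist_le_dist_variationOnFromTo {X α : Type*} [PseudoMetricSpace X] [LinearOrder α]
    {f : α → X} (hf : LocallyBoundedVariationOn f univ) (a b c : α) :
    dist (f b) (f c) ≤ dist (variationOnFromTo f univ a b) (variationOnFromTo f univ a c) := by
  wlog hbc : b ≤ c generalizing b c
  · rw [dist_comm, dist_comm (variationOnFromTo _ _ _ _)]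
    exact this c b (le_of_not_ge hbc)
  have h_edist : edist (f b) (f c) ≤ eVariationOn f (univ ∩ Icc b c) :=
    eVariationOn.edist_le f ⟨mem_univ b, left_mem_Icc.2 hbc⟩ ⟨mem_univ c, right_mem_Icc.2 hbc⟩
  calc dist (f b) (f c) ≤ (eVariationOn f (univ ∩ Icc b c)).toReal := by
        rw [dist_edist]
        exact ENNReal.toReal_mono (hf b c (mem_univ b) (mem_univ c)) h_edist
    _ = variationOnFromTo f univ a c - variationOnFromTo f univ a b := by
        rw [variationOnFromTo.sub_right hf (mem_univ a) (mem_univ c) (mem_univ b),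
          variationOnFromTo.eq_of_le f univ hbc]
    _ ≤ _ := by
        rw [dist_comm, Real.dist_eq]
        exact le_abs_self _

lemma continuous_variationOnFromTo {X α : Type*} [PseudoMetricSpace X] [LinearOrder α]
    [TopologicalSpace α] [OrderTopology α] {f : α → X} (hf : Continuous f)
    (hv : LocallyBoundedVariationOn f univ) (a : α) :
    Continuous (variationOnFromTo f univ a) := by
  refine continuous_iff_continuousAt.2 fun b =>
    continuousAt_iff_continuous_left'_right'.2 ⟨?_, ?_⟩
  · simpa only [ContinuousWithinAt, univ_inter, dist_self, sub_zero] using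
      variationOnFromTo.tendsto_left (mem_univ a) (mem_univ b) hv hf.continuousWithinAt
  · simpa only [ContinuousWithinAt, univ_inter, dist_self, add_zero] using
      variationOnFromTo.tendsto_right (mem_univ a) (mem_univ b) hv hf.continuousWithinAt

lemma exists_lipschitzWith_path {X : Type*} [MetricSpace X] {x y : X} (γ : Path x y)
    (hγ : pathLength γ ≠ ⊤) :
    ∃ γ' : Path x y, LipschitzWith (pathLength γ).toNNReal γ' ∧ range γ' ⊆ range γ := by
  have hv : LocallyBoundedVariationOn γ univ := BoundedVariationOn.locallyBoundedVariationOn hγ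
  set v : I → ℝ := variationOnFromTo γ univ 0 with hv_def
  set ℓ : ℝ≥0 := (pathLength γ).toNNReal
  have hv0 : v 0 = 0 := variationOnFromTo.self _ _ _
  have hv1 : v 1 = ℓ := by
    rw [hv_def, variationOnFromTo.eq_of_le _ _ zero_le_one, univ_inter,
      show Icc (0 : I) 1 = univ from Icc_bot_top]
    rfl
  have h_surj : ∀ t : I, ∃ c, v c = ℓ * t := fun t => by
    refine intermediate_value_univ 0 1 (continuous_variationOnFromTo γ.continuous hv 0) ?_
    change _ ∈ Icc (v 0) (v 1)
    rw [hv0, hv1]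
    exact ⟨mul_nonneg ℓ.2 t.2.1, mul_le_of_le_one_right ℓ.2 t.2.2⟩
  choose c hc using h_surj
  have h_dist : ∀ s t, dist (γ s) (γ t) ≤ dist (v s) (v t) :=
    dist_le_dist_variationOnFromTo hv 0
  have h_lip : LipschitzWith ℓ (γ ∘ c) := LipschitzWith.of_dist_le_mul fun s t => by
    refine (h_dist _ _).trans_eq ?_
    rw [hc, hc, Real.dist_eq, ← mul_sub, abs_mul, NNReal.abs_eq, Subtype.dist_eq, Real.dist_eq]
  have h_eq : ∀ s t, v s = v t → γ s = γ t := fun s t h =>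
    dist_le_zero.1 ((h_dist s t).trans_eq (by rw [h, dist_self]))
  refine ⟨⟨⟨γ ∘ c, h_lip.continuous⟩, ?_, ?_⟩, h_lip, range_comp_subset_range c γ⟩
  · exact (h_eq (c 0) 0 (by simp [hc, hv0])).trans γ.source
  · exact (h_eq (c 1) 1 (by simp [hc, hv1])).trans γ.target

lemma exists_lipschitzWith_of_intrinsicEDist_lt {X : Type*} [MetricSpace X] {A : Set X} {x y : X}
    {K : ℝ≥0} (h : intrinsicEDist A x y < K) :
    ∃ γ : Path x y, LipschitzWith K γ ∧ ∀ t, γ t ∈ A := by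
  obtain ⟨γ, hγA, hγ⟩ := intrinsicEDist_lt_iff.1 h
  obtain ⟨γ', hγ', hγ'γ⟩ := exists_lipschitzWith_path γ hγ.ne_top
  exact ⟨γ', hγ'.weaken (ENNReal.toNNReal_mono ENNReal.coe_ne_top hγ.le), fun t =>
    range_subset_iff.2 hγA (hγ'γ (mem_range_self t))⟩

end LipschitzPaths

section GeodesicSpaces

/-- A geodesic space: any two points are joined by a path which, parametrized by `[0, 1]`, is
Lipschitz with constant the distance of its endpoints, hence a minimizing geodesic of constant
speed. -/
def IsGeodesicSpace (X : Type*) [PseudoMetricSpace X] : Prop :=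
  ∀ x z : X, ∃ γ : Path x z, LipschitzWith (nndist x z) γ

lemma IsGeodesicSpace.isLengthSpace {X : Type*} [PseudoMetricSpace X] (hX : IsGeodesicSpace X) :
    IsLengthSpace X := fun x z => by
  obtain ⟨γ, hγ⟩ := hX x z
  refine le_antisymm edist_le_intrinsicEDist ?_
  calc intrinsicEDist univ x z ≤ pathLength γ := intrinsicEDist_le_pathLength γ fun _ => mem_univ _
    _ ≤ nndist x z := pathLength_le_of_lipschitzWith hγ
    _ = edist x z := (edist_nndist x z).symm

lemma exists_lipschitzWith_of_tendsto {X ι : Type*} [MetricSpace X] [ProperSpace X]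
    {l : Filter ι} [l.NeBot] {x z : ι → X} {x₀ z₀ p : X} {K : ι → ℝ≥0} {K₀ : ℝ≥0}
    {R : ι → ℝ} {R₀ : ℝ} (hx : Tendsto x l (𝓝 x₀)) (hz : Tendsto z l (𝓝 z₀))
    (hK : Tendsto K l (𝓝 K₀)) (hR : Tendsto R l (𝓝 R₀))
    (h : ∀ᶠ i in l, ∃ γ : Path (x i) (z i),
      LipschitzWith (K i) γ ∧ ∀ t, γ t ∈ closedBall p (R i)) :
    ∃ γ : Path x₀ z₀, LipschitzWith K₀ γ ∧ ∀ t, γ t ∈ closedBall p R₀ := by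
  have h_fun : ∀ᶠ i in l, ∃ γ : I → X, γ 0 = x i ∧ γ 1 = z i ∧ LipschitzWith (K i) γ ∧
      ∀ t, γ t ∈ closedBall p (R i) :=
    h.mono fun i ⟨γ, hγ⟩ => ⟨γ, γ.source, γ.target, hγ⟩
  obtain ⟨γ, hγ⟩ := h_fun.choice
  set u := Ultrafilter.of l
  have hu : ↑u ≤ l := Ultrafilter.of_le l
  replace hγ := hγ.filter_mono hu
  have h_lim : ∀ t, ∃ c, Tendsto (fun i => γ i t) u (𝓝 c) := fun t => by
    have h_ev : ∀ᶠ i in u, γ i t ∈ closedBall p (R₀ + 1) := by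
      filter_upwards [hγ, (hR.mono_left hu).eventually_le_const (lt_add_one R₀)] with i hi hRi
      exact closedBall_subset_closedBall hRi (hi.2.2.2 t)
    obtain ⟨c, -, hc⟩ := (isCompact_closedBall p (R₀ + 1)).ultrafilter_le_nhds
      (u.map fun i => γ i t) (le_principal_iff.2 h_ev)
    exact ⟨c, hc⟩
  choose c hc using h_lim
  have h_lip : LipschitzWith K₀ c := LipschitzWith.of_dist_le_mul fun s t =>
    le_of_tendsto_of_tendsto ((hc s).dist (hc t))
      ((NNReal.tendsto_coe.2 (hK.mono_left hu)).mul_const _)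
      (hγ.mono fun i hi => hi.2.2.1.dist_le_mul s t)
  refine ⟨⟨⟨c, h_lip.continuous⟩, ?_, ?_⟩, h_lip, fun t => ?_⟩
  · exact tendsto_nhds_unique (hc 0) ((hx.mono_left hu).congr' (hγ.mono fun i hi => hi.1.symm))
  · exact tendsto_nhds_unique (hc 1) ((hz.mono_left hu).congr' (hγ.mono fun i hi => hi.2.1.symm))
  · exact le_of_tendsto_of_tendsto ((hc t).dist tendsto_const_nhds) (hR.mono_left hu)
      (hγ.mono fun i hi => hi.2.2.2 t)

lemma intrinsicEDist_closedBall_le_of_tendsto {X ι : Type*} [MetricSpace X] [ProperSpace X]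
    {l : Filter ι} [l.NeBot] {x z : ι → X} {x₀ z₀ p : X} {R : ι → ℝ} {R₀ : ℝ} {L : ℝ≥0∞}
    (hx : Tendsto x l (𝓝 x₀)) (hz : Tendsto z l (𝓝 z₀)) (hR : Tendsto R l (𝓝 R₀))
    (hL : Tendsto (fun i => intrinsicEDist (closedBall p (R i)) (x i) (z i)) l (𝓝 L)) :
    intrinsicEDist (closedBall p R₀) x₀ z₀ ≤ L := by
  refine le_of_forall_gt_imp_ge_of_dense fun c hc => ?_
  obtain ⟨K, hLK, hKc⟩ := ENNReal.lt_iff_exists_nnreal_btwn.1 hc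
  obtain ⟨γ, hγ, hγR⟩ := exists_lipschitzWith_of_tendsto hx hz (tendsto_const_nhds (x := K)) hR
    ((hL.eventually_lt_const hLK).mono fun i hi => exists_lipschitzWith_of_intrinsicEDist_lt hi)
  exact ((intrinsicEDist_le_pathLength γ hγR).trans (pathLength_le_of_lipschitzWith hγ)).trans
    hKc.le

lemma IsLengthSpace.isGeodesicSpace {X : Type*} [MetricSpace X] [ProperSpace X]
    (hX : IsLengthSpace X) : IsGeodesicSpace X := fun x z => by
  let K : ℕ → ℝ≥0 := fun n => nndist x z + 1 / ((n : ℝ≥0) + 1)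
  have hK : Tendsto K atTop (𝓝 (nndist x z)) := by
    simpa only [add_zero] using
      tendsto_const_nhds.add (tendsto_one_div_add_atTop_nhds_zero_nat (𝕜 := ℝ≥0))
  have h_lt : ∀ n, intrinsicEDist univ x z < K n := fun n => by
    rw [← hX x z, edist_nndist, ENNReal.coe_lt_coe]
    exact lt_add_of_pos_right _ (by positivity)
  obtain ⟨γ, hγ, -⟩ := exists_lipschitzWith_of_tendsto (tendsto_const_nhds (x := x))
    (tendsto_const_nhds (x := z)) hK (NNReal.tendsto_coe.2 hK) (Eventually.of_forall fun n => by
      obtain ⟨γ, hγ, -⟩ := exists_lipschitzWith_of_intrinsicEDist_lt (h_lt n)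
      exact ⟨γ, hγ, mem_closedBall_target_of_lipschitzWith hγ⟩)
  exact ⟨γ, hγ⟩

lemma IsGeodesicSpace.exists_retraction {X : Type*} [PseudoMetricSpace X]
    (hX : IsGeodesicSpace X) (p : X) {r : ℝ} (hr : 0 ≤ r) (R : ℝ) :
    ∃ π : X → X, (∀ x ∈ closedBall p r, π x = x) ∧ ∀ x ∈ closedBall p R,
      π x ∈ closedBall p r ∧ intrinsicEDist (closedBall p R) x (π x) ≤ ENNReal.ofReal (R - r) := by
  suffices h : ∀ x, ∃ x', (x ∈ closedBall p r → x' = x) ∧ (x ∈ closedBall p R →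
      x' ∈ closedBall p r ∧ intrinsicEDist (closedBall p R) x x' ≤ ENNReal.ofReal (R - r)) by
    choose π hπ using h
    exact ⟨π, fun x => (hπ x).1, fun x => (hπ x).2⟩
  intro x
  rcases le_or_gt (dist x p) r with hxr | hxr
  · exact ⟨x, fun _ => rfl, fun hxR => ⟨hxr, (intrinsicEDist_self hxR).trans_le zero_le⟩⟩
  obtain ⟨γ, hγ⟩ := hX x p
  have hD : 0 < dist x p := hr.trans_lt hxr
  let s : I := ⟨1 - r / dist x p, sub_nonneg.2 ((div_le_one hD).2 hxr.le),
    sub_le_self _ (by positivity)⟩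
  refine ⟨γ s, fun h => absurd h (not_le.2 hxr), fun hxR => ⟨?_, ?_⟩⟩
  · calc dist (γ s) p = dist (γ s) (γ 1) := by rw [γ.target]
      _ ≤ dist x p * dist s 1 := hγ.dist_le_mul s 1
      _ = r := by
        rw [dist_comm s, Subtype.dist_eq, Real.dist_eq, Icc.coe_one, sub_sub_cancel,
          abs_of_nonneg (by positivity), mul_div_cancel₀ r hD.ne']
  · have h_mem : ∀ t, γ t ∈ closedBall p R := fun t =>
      closedBall_subset_closedBall hxR (mem_closedBall_target_of_lipschitzWith hγ t)
    calc intrinsicEDist (closedBall p R) x (γ s)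
        = intrinsicEDist (closedBall p R) (γ 0) (γ s) := by rw [γ.source]
      _ ≤ nndist x p * edist 0 s := intrinsicEDist_le_mul_edist hγ h_mem 0 s
      _ = ENNReal.ofReal (dist x p - r) := by
        rw [edist_dist, ← ENNReal.ofReal_coe_nnreal, ← ENNReal.ofReal_mul NNReal.zero_le_coe,
          coe_nndist, dist_comm 0 s, Subtype.dist_eq, Real.dist_eq, Icc.coe_zero, sub_zero,
          abs_of_nonneg s.2.1, mul_sub, mul_one, mul_div_cancel₀ r hD.ne']
      _ ≤ ENNReal.ofReal (R - r) := ENNReal.ofReal_le_ofReal (sub_le_sub_right hxR r)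

end GeodesicSpaces

section LengthSpaces

lemma IsLengthSpace.intrinsicEDist_closedBall_le {X : Type*} [PseudoMetricSpace X]
    (hX : IsLengthSpace X) {p x z : X} {R : ℝ} (h : dist x p + dist x z < R) :
    intrinsicEDist (closedBall p R) x z ≤ edist x z := by
  refine le_of_forall_gt_imp_ge_of_dense fun c hc => ?_
  have h_room : edist x z < ENNReal.ofReal (R - dist x p) := by
    rw [edist_dist]
    exact (ENNReal.ofReal_lt_ofReal_iff (by linarith [dist_nonneg (x := x) (y := z)])).2
      (by linarith)
  rw [hX x z] at hc h_room
  obtain ⟨γ, -, hγ⟩ := intrinsicEDist_lt_iff.1 (lt_min hc h_room)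
  refine (intrinsicEDist_le_pathLength γ fun t => ?_).trans (hγ.le.trans (min_le_left _ _))
  have h_dist : dist (γ t) x ≤ R - dist x p := by
    have h' := (edist_apply_le_pathLength γ t 0).trans (hγ.le.trans (min_le_right _ _))
    rw [γ.source] at h'
    exact (edist_le_ofReal (by linarith [dist_nonneg (x := x) (y := z)])).1 h'
  exact mem_closedBall.2 (by linarith [dist_triangle (γ t) x p])

lemma IsLengthSpace.intrinsicEDist_closedBall_le_two_mul {X : Type*} [PseudoMetricSpace X]
    (hX : IsLengthSpace X) {p x z : X} {r R : ℝ} (hrR : r < R) (hx : x ∈ closedBall p r)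
    (hz : z ∈ closedBall p r) :
    intrinsicEDist (closedBall p R) x z ≤ ENNReal.ofReal (2 * r) := by
  have hr : 0 ≤ r := dist_nonneg.trans hx
  have h_center : ∀ v ∈ closedBall p r,
      intrinsicEDist (closedBall p R) p v ≤ ENNReal.ofReal r := fun v hv =>
    (hX.intrinsicEDist_closedBall_le (by
      rw [dist_self, zero_add]; exact (mem_closedBall'.1 hv).trans_lt hrR)).trans
      ((edist_le_ofReal hr).2 (mem_closedBall'.1 hv))
  calc intrinsicEDist (closedBall p R) x z
      ≤ intrinsicEDist (closedBall p R) x p + intrinsicEDist (closedBall p R) p z :=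
        intrinsicEDist_triangle
    _ ≤ ENNReal.ofReal r + ENNReal.ofReal r :=
        add_le_add (intrinsicEDist_comm.trans_le (h_center x hx)) (h_center z hz)
    _ = ENNReal.ofReal (2 * r) := by rw [← ENNReal.ofReal_add hr hr, two_mul]

lemma IsLengthSpace.tendsto_intrinsicEDist {X ι : Type*} [PseudoMetricSpace X]
    (hX : IsLengthSpace X) {l : Filter ι} {p x₀ : X} {x : ι → X} {R : ℝ} (hx₀ : dist x₀ p < R)
    (hx : Tendsto x l (𝓝 x₀)) :
    Tendsto (fun i => intrinsicEDist (closedBall p R) x₀ (x i)) l (𝓝 0) := by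
  have h_dist : Tendsto (fun i => dist x₀ (x i)) l (𝓝 0) := by
    simpa only [dist_comm] using tendsto_iff_dist_tendsto_zero.1 hx
  refine tendsto_of_tendsto_of_tendsto_of_le_of_le' tendsto_const_nhds
    (by simpa only [edist_self] using (tendsto_const_nhds (x := x₀)).edist hx)
    (Eventually.of_forall fun i => zero_le) ?_
  filter_upwards [h_dist.eventually_lt_const (sub_pos.2 hx₀)] with i hi
  exact hX.intrinsicEDist_closedBall_le (by linarith)

lemma IsLengthSpace.exists_intrinsicEDist_le_add {X : Type*} [MetricSpace X] [ProperSpace X]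
    (hX : IsLengthSpace X) (p : X) {r R ε : ℝ} (hrR : r < R) (hε : 0 < ε) :
    ∃ R' > R, ∀ x ∈ closedBall p r, ∀ z ∈ closedBall p r,
      intrinsicEDist (closedBall p R) x z ≤
        intrinsicEDist (closedBall p R') x z + ENNReal.ofReal ε := by
  by_contra! h_not
  let R' : ℕ → ℝ := fun n => R + 1 / ((n : ℝ) + 1)
  have hR' : Tendsto R' atTop (𝓝 R) := by
    simpa only [add_zero] using
      tendsto_const_nhds.add (tendsto_one_div_add_atTop_nhds_zero_nat (𝕜 := ℝ))
  choose x hx z hz h_lt using fun n : ℕ => h_not (R' n) (lt_add_of_pos_right R (by positivity))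
  let u : Ultrafilter ℕ := Ultrafilter.of atTop
  have hu : ↑u ≤ (atTop : Filter ℕ) := Ultrafilter.of_le _
  have h_compact : ∀ v : ℕ → X, (∀ n, v n ∈ closedBall p r) →
      ∃ v₀ ∈ closedBall p r, Tendsto v u (𝓝 v₀) := fun v hv =>
    (isCompact_closedBall p r).ultrafilter_le_nhds (u.map v)
      (tendsto_principal.2 (Eventually.of_forall hv))
  obtain ⟨x₀, hx₀, hxu⟩ := h_compact x hx
  obtain ⟨z₀, hz₀, hzu⟩ := h_compact z hz
  let ℓ : ℕ → ℝ≥0∞ := fun n => intrinsicEDist (closedBall p (R' n)) (x n) (z n)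
  obtain ⟨L, hL⟩ : ∃ L, Tendsto ℓ u (𝓝 L) := ⟨_, (u.map ℓ).le_nhds_lim⟩
  have h_lower : intrinsicEDist (closedBall p R) x₀ z₀ ≤ L :=
    intrinsicEDist_closedBall_le_of_tendsto hxu hzu (hR'.mono_left hu) hL
  have h_upper : ∀ n, ℓ n + ENNReal.ofReal ε ≤
      intrinsicEDist (closedBall p R) x₀ (x n) + intrinsicEDist (closedBall p R) x₀ z₀ +
        intrinsicEDist (closedBall p R) z₀ (z n) := fun n =>
    (h_lt n).le.trans (intrinsicEDist_triangle.trans (add_le_add_left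
      (intrinsicEDist_triangle.trans_eq (by rw [intrinsicEDist_comm (x := x n)])) _))
  have h_limit : L + ENNReal.ofReal ε ≤ 0 + intrinsicEDist (closedBall p R) x₀ z₀ + 0 :=
    le_of_tendsto_of_tendsto' (hL.add tendsto_const_nhds)
      (((hX.tendsto_intrinsicEDist (hx₀.trans_lt hrR) hxu).add tendsto_const_nhds).add
        (hX.tendsto_intrinsicEDist (hz₀.trans_lt hrR) hzu)) h_upper
  rw [zero_add, add_zero] at h_limit
  have h_finite : L ≠ ⊤ := ((le_self_add.trans h_limit).trans_lt
    ((hX.intrinsicEDist_closedBall_le_two_mul hrR hx₀ hz₀).trans_lt ENNReal.ofReal_lt_top)).ne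
  exact ((ENNReal.lt_add_right h_finite (ENNReal.ofReal_pos.2 hε).ne').trans_le
    (h_limit.trans h_lower)).false

end LengthSpaces

section CoarseMaps

variable {X Y : Type*} [MetricSpace X] [PseudoMetricSpace Y]

lemma exists_chain_of_intrinsicEDist_lt {A : Set X} {a b : X} {L : ℝ≥0} {n : ℕ} (hn : 0 < n)
    (h : intrinsicEDist A a b < L) :
    ∃ u : ℕ → X, u 0 = a ∧ u n = b ∧ (∀ k, u k ∈ A) ∧ ∀ k, dist (u k) (u (k + 1)) ≤ L / n := by
  obtain ⟨γ, hγ, hγA⟩ := exists_lipschitzWith_of_intrinsicEDist_lt h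
  let t : ℕ → I := fun k => projIcc (0 : ℝ) 1 zero_le_one (k / n)
  have ht : ∀ k, dist (t k) (t (k + 1)) ≤ 1 / n := fun k => by
    refine ((LipschitzWith.projIcc zero_le_one).dist_le_mul _ _).trans_eq ?_
    rw [NNReal.coe_one, one_mul, dist_comm, Real.dist_eq, ← sub_div, Nat.cast_add_one,
      add_sub_cancel_left, abs_of_nonneg (by positivity)]
  refine ⟨fun k => γ (t k), ?_, ?_, fun k => hγA _, fun k => ?_⟩
  · simp [t]
  · have hn' : (n : ℝ) ≠ 0 := by positivity
    simp [t, hn']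
  · calc dist (γ (t k)) (γ (t (k + 1))) ≤ L * dist (t k) (t (k + 1)) := hγ.dist_le_mul _ _
      _ ≤ L * (1 / n) := mul_le_mul_of_nonneg_left (ht k) L.2
      _ = L / n := mul_one_div _ _

lemma IsLengthSpace.intrinsicEDist_map_le_of_lt (hY : IsLengthSpace Y) {A : Set X} {f : X → Y}
    {y : Y} {e r R : ℝ} (hf : ∀ a ∈ A, ∀ b ∈ A, dist (f a) (f b) ≤ dist a b + e)
    (hfA : MapsTo f A (closedBall y r)) {a b : X} {L : ℝ≥0} {n : ℕ} (hn : 0 < n)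
    (hab : intrinsicEDist A a b < L) (hR : r + L / n + e < R) :
    intrinsicEDist (closedBall y R) (f a) (f b) ≤ L + ENNReal.ofReal (n * e) := by
  obtain ⟨u, rfl, rfl, huA, hu⟩ := exists_chain_of_intrinsicEDist_lt hn hab
  have h_step : ∀ k, dist (f (u k)) (f (u (k + 1))) ≤ L / n + e := fun k =>
    (hf _ (huA k) _ (huA (k + 1))).trans (by grw [hu k])
  have he : 0 ≤ L / n + e := dist_nonneg.trans (h_step 0)
  have h_mem : ∀ k, dist (f (u k)) y ≤ r := fun k => hfA (huA k)
  calc intrinsicEDist (closedBall y R) (f (u 0)) (f (u n))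
      ≤ ∑ k ∈ Finset.range n, intrinsicEDist (closedBall y R) (f (u k)) (f (u (k + 1))) :=
        intrinsicEDist_le_sum (u := f ∘ u)
          (mem_closedBall.2 ((h_mem 0).trans (by linarith))) n
    _ ≤ ∑ _k ∈ Finset.range n, ENNReal.ofReal (L / n + e) :=
        Finset.sum_le_sum fun k _ =>
          (hY.intrinsicEDist_closedBall_le (by linarith [h_mem k, h_step k])).trans
            ((edist_le_ofReal he).2 (h_step k))
    _ = ENNReal.ofReal (L + n * e) := by
        have hn' : (n : ℝ) ≠ 0 := by positivity
        rw [Finset.sum_const, Finset.card_range, ← ENNReal.ofReal_nsmul, nsmul_eq_mul, mul_add,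
          mul_div_cancel₀ _ hn']
    _ ≤ L + ENNReal.ofReal (n * e) :=
        ENNReal.ofReal_add_le.trans_eq (by rw [ENNReal.ofReal_coe_nnreal])

lemma IsLengthSpace.intrinsicEDist_map_le (hY : IsLengthSpace Y) {A : Set X} {f : X → Y}
    {y : Y} {e r R C : ℝ} (hf : ∀ a ∈ A, ∀ b ∈ A, dist (f a) (f b) ≤ dist a b + e)
    (hfA : MapsTo f A (closedBall y r)) {a b : X} {n : ℕ} (hn : 0 < n) (hC : 0 ≤ C)
    (hab : intrinsicEDist A a b ≤ ENNReal.ofReal C) (hR : r + C / n + e < R) :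
    intrinsicEDist (closedBall y R) (f a) (f b) ≤
      intrinsicEDist A a b + ENNReal.ofReal (n * e) := by
  obtain ⟨L₀, hL₀⟩ : ∃ L₀ : ℝ≥0, intrinsicEDist A a b = L₀ :=
    ⟨_, (ENNReal.coe_toNNReal (hab.trans_lt ENNReal.ofReal_lt_top).ne).symm⟩
  rw [hL₀] at hab ⊢
  have hL₀C : (L₀ : ℝ) ≤ C := by
    rw [← ENNReal.ofReal_coe_nnreal] at hab
    exact (ENNReal.ofReal_le_ofReal_iff hC).1 hab
  have h_room : ∀ᶠ L : ℝ≥0 in 𝓝[>] L₀, r + L / n + e < R := by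
    have h_cont : Continuous fun L : ℝ≥0 => r + L / n + e := by fun_prop
    refine (h_cont.continuousAt.eventually_lt_const ?_).filter_mono nhdsWithin_le_nhds
    have h_div : (L₀ : ℝ) / n ≤ C / n := by gcongr
    linarith
  have h_lim : Tendsto (fun L : ℝ≥0 => (L : ℝ≥0∞) + ENNReal.ofReal (n * e)) (𝓝[>] L₀)
      (𝓝 (L₀ + ENNReal.ofReal (n * e))) :=
    ((ENNReal.tendsto_coe.2 tendsto_id).mono_left nhdsWithin_le_nhds).add_const _
  refine ge_of_tendsto h_lim ?_
  filter_upwards [h_room, self_mem_nhdsWithin] with L hL hL₀L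
  exact hY.intrinsicEDist_map_le_of_lt hf hfA hn (hL₀ ▸ ENNReal.coe_lt_coe.2 hL₀L) hL

end CoarseMaps

section PointedApproximations

lemma dist_le_add_of_edist_le_add {X Y : Type*} [PseudoMetricSpace X] [PseudoMetricSpace Y]
    {a b : X} {c d : Y} {e : ℝ} (he : 0 ≤ e) (h : edist a b ≤ edist c d + ENNReal.ofReal e) :
    dist a b ≤ dist c d + e := by
  rw [edist_dist c d, ← ENNReal.ofReal_add dist_nonneg he] at h
  exact (edist_le_ofReal (by positivity)).1 h

lemma le_add_ofReal_of_le_of_le {P Q S : ℝ≥0∞} {a b c : ℝ} (ha : 0 ≤ a) (hb : 0 ≤ b)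
    (hPQ : P ≤ Q + ENNReal.ofReal a) (hQS : Q ≤ S + ENNReal.ofReal b) (h : a + b ≤ c) :
    P ≤ S + ENNReal.ofReal c := by
  calc P ≤ S + ENNReal.ofReal b + ENNReal.ofReal a := by grw [hPQ, hQS]
    _ = S + ENNReal.ofReal (a + b) := by rw [add_comm a b, ENNReal.ofReal_add hb ha, add_assoc]
    _ ≤ S + ENNReal.ofReal c := by grw [h]

/-- A pointed `e`-approximation of radius `r` from `(X, p)` to `(Y, y)`, in the sense of
Burago–Burago–Ivanov, Definition 8.1.1: the image of `B(p, r)` need not lie in `B(y, r)`, and it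
only has to be `e`-dense in `B(y, r - e)`. Being insensitive to small changes of the radius, it
mediates between the restricted and the intrinsic approximations of balls. -/
structure IsPointedApprox {X Y : Type*} [PseudoMetricSpace X] [PseudoMetricSpace Y] (e r : ℝ)
    (p : X) (y : Y) (f : X → Y) : Prop where
  map_base : f p = y
  abs_dist_sub_le : ∀ a ∈ closedBall p r, ∀ b ∈ closedBall p r,
    |dist (f a) (f b) - dist a b| ≤ e
  exists_dist_le : ∀ b ∈ closedBall y (r - e), ∃ a ∈ closedBall p r, dist (f a) b ≤ e

namespace IsPointedApprox

section Basic

variable {X Y : Type*} [PseudoMetricSpace X] [PseudoMetricSpace Y] {e r s : ℝ} {p : X} {y : Y}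
  {f : X → Y}

lemma dist_map_le (hf : IsPointedApprox e r p y f) {a b : X} (ha : a ∈ closedBall p r)
    (hb : b ∈ closedBall p r) : dist (f a) (f b) ≤ dist a b + e := by
  linarith [(abs_le.1 (hf.abs_dist_sub_le a ha b hb)).2]

lemma dist_le (hf : IsPointedApprox e r p y f) {a b : X} (ha : a ∈ closedBall p r)
    (hb : b ∈ closedBall p r) : dist a b ≤ dist (f a) (f b) + e := by
  linarith [(abs_le.1 (hf.abs_dist_sub_le a ha b hb)).1]

lemma map_mem_closedBall (hf : IsPointedApprox e r p y f) (hsr : s ≤ r) {a : X}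
    (ha : a ∈ closedBall p s) : f a ∈ closedBall y (s + e) := by
  have har : a ∈ closedBall p r := closedBall_subset_closedBall hsr ha
  have h := hf.dist_map_le har (mem_closedBall_self (dist_nonneg.trans har))
  rw [hf.map_base] at h
  exact h.trans (add_le_add_left ha e)

lemma mem_closedBall_of_map (hf : IsPointedApprox e r p y f) {a : X} (ha : a ∈ closedBall p r)
    (hfa : f a ∈ closedBall y s) : a ∈ closedBall p (s + e) := by
  have h := hf.dist_le ha (mem_closedBall_self (dist_nonneg.trans ha))
  rw [hf.map_base] at h
  exact h.trans (add_le_add_left hfa e)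

lemma mono (hf : IsPointedApprox e r p y f) {ε : ℝ} (h : e ≤ ε) : IsPointedApprox ε r p y f where
  map_base := hf.map_base
  abs_dist_sub_le a ha b hb := (hf.abs_dist_sub_le a ha b hb).trans h
  exists_dist_le b hb := by
    obtain ⟨a, ha, hab⟩ := hf.exists_dist_le b
      (closedBall_subset_closedBall (sub_le_sub_left h r) hb)
    exact ⟨a, ha, hab.trans h⟩

end Basic

section Intrinsic

variable {X Y : Type*} [MetricSpace X] [MetricSpace Y] {e ρ : ℝ} {p : X} {y : Y} {f : X → Y}

lemma intrinsicEDist_map_le (hY : IsLengthSpace Y) (hf : IsPointedApprox e ρ p y f) {s R C : ℝ}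
    (hs : s ≤ ρ) {n : ℕ} (hn : 0 < n) (hC : 0 ≤ C) (hR : s + 2 * e + C / n < R) {a b : X}
    (hab : intrinsicEDist (closedBall p s) a b ≤ ENNReal.ofReal C) :
    intrinsicEDist (closedBall y R) (f a) (f b) ≤
      intrinsicEDist (closedBall p s) a b + ENNReal.ofReal (n * e) :=
  have hsub : closedBall p s ⊆ closedBall p ρ := closedBall_subset_closedBall hs
  hY.intrinsicEDist_map_le (fun _ ha _ hb => hf.dist_map_le (hsub ha) (hsub hb))
    (fun _ ha => hf.map_mem_closedBall hs ha) hn hC hab (by linarith)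

/-- The forward estimate, applied to an approximate right inverse of `f`. -/
lemma intrinsicEDist_le_map (hX : IsLengthSpace X) (hf : IsPointedApprox e ρ p y f) (he : 0 ≤ e)
    {R S C : ℝ} (hRρ : R ≤ ρ - e) {n : ℕ} (hn : 0 < n) (hC : 0 ≤ C)
    (hS : R + 5 * e + C / n < S) {a b : X} (ha : a ∈ closedBall p ρ) (hb : b ∈ closedBall p ρ)
    (hfa : f a ∈ closedBall y R) (hfb : f b ∈ closedBall y R)
    (hab : intrinsicEDist (closedBall y R) (f a) (f b) ≤ ENNReal.ofReal C) :
    intrinsicEDist (closedBall p S) a b ≤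
      intrinsicEDist (closedBall y R) (f a) (f b) + ENNReal.ofReal (3 * n * e + 4 * e) := by
  have : Nonempty X := ⟨p⟩
  choose! g hg using hf.exists_dist_le
  have hgρ : ∀ v ∈ closedBall y R, g v ∈ closedBall p ρ ∧ dist (f (g v)) v ≤ e := fun v hv =>
    hg v (closedBall_subset_closedBall hRρ hv)
  have h_dist : ∀ v ∈ closedBall y R, ∀ w ∈ closedBall y R,
      dist (g v) (g w) ≤ dist v w + 3 * e := fun v hv w hw => by
    linarith [hf.dist_le (hgρ v hv).1 (hgρ w hw).1, (hgρ v hv).2, (hgρ w hw).2,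
      dist_triangle4_right (f (g v)) (f (g w)) v w]
  have h_maps : MapsTo g (closedBall y R) (closedBall p (R + 2 * e)) := fun v hv => by
    have hfgv : f (g v) ∈ closedBall y (R + e) :=
      mem_closedBall.2 (by linarith [(hgρ v hv).2, dist_triangle (f (g v)) v y, hv.out])
    have hgv := hf.mem_closedBall_of_map (hgρ v hv).1 hfgv
    rwa [add_assoc, ← two_mul] at hgv
  have h_return : ∀ x ∈ closedBall p ρ, f x ∈ closedBall y R →
      intrinsicEDist (closedBall p S) x (g (f x)) ≤ ENNReal.ofReal (2 * e) := fun x hx hfx => by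
    have hgfx : dist x (g (f x)) ≤ 2 * e := by
      linarith [hf.dist_le hx (hgρ _ hfx).1, (hgρ _ hfx).2, dist_comm (f x) (f (g (f x)))]
    have hCn : 0 ≤ C / n := by positivity
    have hxR : dist x p ≤ R + e := hf.mem_closedBall_of_map hx hfx
    exact (hX.intrinsicEDist_closedBall_le (by linarith)).trans
      ((edist_le_ofReal (by positivity)).2 hgfx)
  have h_inverse := hX.intrinsicEDist_map_le h_dist h_maps hn hC hab (R := S) (by linarith)
  exact le_add_ofReal_of_le_of_le (by positivity) (by positivity)
    (intrinsicEDist_le_add_two_mul (h_return a ha hfa) (h_return b hb hfb)) h_inverse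
    (by linarith)

lemma exists_intrinsicEDist_map_le (hY : IsGeodesicSpace Y) (hf : IsPointedApprox e ρ p y f)
    (he : 0 ≤ e) {r R : ℝ} (her : 2 * e ≤ r) (hrR : r < R) (hrρ : r ≤ ρ) {b : Y}
    (hb : b ∈ closedBall y R) :
    ∃ a ∈ closedBall p r,
      intrinsicEDist (closedBall y R) (f a) b ≤ ENNReal.ofReal (R - r + 3 * e) := by
  obtain ⟨π, -, hπ⟩ := hY.exists_retraction y (sub_nonneg.2 her) R
  obtain ⟨hπb, hbπ⟩ := hπ b hb
  obtain ⟨a, ha, hab⟩ := hf.exists_dist_le (π b)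
    (closedBall_subset_closedBall (by linarith) hπb)
  have hfa : f a ∈ closedBall y (r - e) :=
    mem_closedBall.2 (by linarith [dist_triangle (f a) (π b) y, mem_closedBall.1 hπb])
  refine ⟨a, by simpa only [sub_add_cancel] using hf.mem_closedBall_of_map ha hfa, ?_⟩
  calc intrinsicEDist (closedBall y R) (f a) b
      ≤ intrinsicEDist (closedBall y R) (f a) (π b) + intrinsicEDist (closedBall y R) b (π b) :=
        intrinsicEDist_triangle.trans_eq (by rw [intrinsicEDist_comm (x := b) (y := π b)])
    _ ≤ ENNReal.ofReal e + ENNReal.ofReal (R - (r - 2 * e)) :=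
        add_le_add ((hY.isLengthSpace.intrinsicEDist_closedBall_le
          (by linarith [mem_closedBall.1 hfa])).trans ((edist_le_ofReal he).2 hab)) hbπ
    _ = ENNReal.ofReal (R - r + 3 * e) := by
        rw [← ENNReal.ofReal_add he (by linarith)]
        ring_nf

end Intrinsic

end IsPointedApprox

end PointedApproximations

section RestrictedBalls

variable {X Y : Type*} [MetricSpace X] [MetricSpace Y] {e R : ℝ} {p : X} {y : Y} {f : X → Y}

lemma RestrictedHA.mono {A : Set X} {B : Set Y} (hf : RestrictedHA e A B f) {ε : ℝ}
    (h : e ≤ ε) : RestrictedHA ε A B f := by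
  refine ⟨hf.1, fun b hb => ?_, fun a ha b hb => (hf.2.2 a ha b hb).trans h⟩
  obtain ⟨a, ha, hab⟩ := hf.2.1 b hb
  exact ⟨a, ha, hab.trans h⟩

lemma RestrictedHA.isPointedApprox (hf : RestrictedHA e (closedBall p R) (closedBall y R) f)
    (hp : f p = y) (he : 0 ≤ e) : IsPointedApprox e R p y f where
  map_base := hp
  abs_dist_sub_le := hf.2.2
  exists_dist_le b hb := hf.2.1 b (closedBall_subset_closedBall (sub_le_self R he) hb)

lemma IsPointedApprox.exists_restrictedHA (hX : IsGeodesicSpace X) (hY : IsGeodesicSpace Y)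
    (hf : IsPointedApprox e R p y f) (he : 0 < e) (heR : 3 * e ≤ R) :
    ∃ F : X → Y, F p = y ∧ RestrictedHA (4 * e) (closedBall p R) (closedBall y R) F := by
  have heR' : 0 ≤ R - e := by linarith
  obtain ⟨π, hπ_id, hπ⟩ := hX.exists_retraction p heR' R
  have hπ_mem : ∀ a ∈ closedBall p R, π a ∈ closedBall p R := fun a ha =>
    closedBall_subset_closedBall (sub_le_self R he.le) (hπ a ha).1
  have hπ_dist : ∀ a ∈ closedBall p R, dist a (π a) ≤ e := fun a ha =>
    dist_le_of_intrinsicEDist_le he.le ((hπ a ha).2.trans_eq (by rw [sub_sub_cancel]))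
  refine ⟨f ∘ π, ?_, fun a ha => ?_, fun b hb => ?_, fun a ha b hb => ?_⟩
  · rw [Function.comp_apply, hπ_id p (mem_closedBall_self heR'), hf.map_base]
  · simpa only [Function.comp_apply, sub_add_cancel] using
      hf.map_mem_closedBall (sub_le_self R he.le) (hπ a ha).1
  · obtain ⟨a, ha, hab⟩ := hf.exists_intrinsicEDist_map_le hY he.le (r := R - e) (by linarith)
      (sub_lt_self R he) (sub_le_self R he.le) hb
    refine ⟨a, closedBall_subset_closedBall (sub_le_self R he.le) ha, ?_⟩
    rw [Function.comp_apply, hπ_id a ha]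
    exact dist_le_of_intrinsicEDist_le (by positivity) (hab.trans_eq (by ring_nf))
  · calc |dist (f (π a)) (f (π b)) - dist a b|
        ≤ |dist (f (π a)) (f (π b)) - dist (π a) (π b)| + |dist (π a) (π b) - dist a b| :=
          abs_sub_le _ _ _
      _ ≤ e + (e + e) := by
          refine add_le_add (hf.abs_dist_sub_le _ (hπ_mem a ha) _ (hπ_mem b hb)) ?_
          rw [abs_sub_comm, ← Real.dist_eq]
          exact (dist_dist_dist_le a b (π a) (π b)).trans
            (add_le_add (hπ_dist a ha) (hπ_dist b hb))
      _ ≤ 4 * e := by linarith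

end RestrictedBalls

section IntrinsicBalls

namespace IntrinsicHA

variable {X Y : Type*} [MetricSpace X] [MetricSpace Y] {e r R ρ : ℝ} {p : X} {y : Y} {f : X → Y}

lemma mono {A : Set X} {B : Set Y} {ε : ℝ} (hf : IntrinsicHA e A B f) (h : e ≤ ε) :
    IntrinsicHA ε A B f := by
  have h_ofReal := ENNReal.ofReal_le_ofReal h
  refine ⟨hf.1, fun b hb => ?_, fun a ha b hb => ?_⟩
  · obtain ⟨a, ha, hab⟩ := hf.2.1 b hb
    exact ⟨a, ha, hab.trans h_ofReal⟩
  · obtain ⟨h_lower, h_upper⟩ := hf.2.2 a ha b hb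
    exact ⟨h_lower.trans (by gcongr), h_upper.trans (by gcongr)⟩

lemma dist_map_le (hX : IsLengthSpace X)
    (hf : IntrinsicHA e (closedBall p ρ) (closedBall y R) f) (he : 0 ≤ e) {a b : X}
    (hb : b ∈ closedBall p ρ) (hab : dist a p + dist a b < ρ) :
    dist (f a) (f b) ≤ dist a b + e := by
  have ha : a ∈ closedBall p ρ := mem_closedBall.2 (by linarith [dist_nonneg (x := a) (y := b)])
  refine dist_le_add_of_edist_le_add he (edist_le_intrinsicEDist.trans
    ((hf.2.2 a ha b hb).2.trans ?_))
  grw [hX.intrinsicEDist_closedBall_le hab]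

lemma dist_le (hY : IsLengthSpace Y)
    (hf : IntrinsicHA e (closedBall p ρ) (closedBall y R) f) (he : 0 ≤ e) {a b : X}
    (ha : a ∈ closedBall p ρ) (hb : b ∈ closedBall p ρ)
    (hab : dist (f a) y + dist (f a) (f b) < R) :
    dist a b ≤ dist (f a) (f b) + e := by
  refine dist_le_add_of_edist_le_add he (edist_le_intrinsicEDist.trans
    ((hf.2.2 a ha b hb).1.trans ?_))
  grw [hY.intrinsicEDist_closedBall_le hab]

lemma isPointedApprox (hX : IsLengthSpace X) (hY : IsLengthSpace Y)
    (hf : IntrinsicHA e (closedBall p ρ) (closedBall y R) f) (hp : f p = y) (he : 0 ≤ e)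
    (hr : 0 ≤ r) (hρ : 3 * r < ρ) (hR : 3 * r + 2 * e < R) :
    IsPointedApprox (2 * e) r p y f := by
  have h_sub : closedBall p r ⊆ closedBall p ρ := closedBall_subset_closedBall (by linarith)
  have hpρ : p ∈ closedBall p ρ := mem_closedBall_self (by linarith)
  refine ⟨hp, fun a ha b hb => ?_, fun b hb => ?_⟩
  · have hab : dist a b ≤ 2 * r := by linarith [dist_triangle_right a b p, ha.out, hb.out]
    have h_upper := hf.dist_map_le hX he (h_sub hb) (by linarith [ha.out])
    have h_base : dist (f a) y ≤ dist a p + e := by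
      simpa only [hp] using hf.dist_map_le hX he hpρ (a := a) (by linarith [ha.out])
    have h_lower := hf.dist_le hY he (h_sub ha) (h_sub hb) (by linarith [ha.out])
    exact abs_le.2 ⟨by linarith, by linarith⟩
  · obtain ⟨a, ha, hab⟩ := hf.2.1 b (closedBall_subset_closedBall (by linarith) hb)
    replace hab := dist_le_of_intrinsicEDist_le he hab
    have hfa : dist (f a) y ≤ r - e := by linarith [dist_triangle (f a) b y, hb.out]
    have h_base : dist a p ≤ dist (f a) y + e := by
      simpa only [hp] using hf.dist_le hY he ha hpρ (by rw [hp]; linarith)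
    exact ⟨a, mem_closedBall.2 (by linarith), by linarith⟩

end IntrinsicHA

namespace IsPointedApprox

/-- Here `d` is the depth to which the retraction `π` pushes, `δ` the width of the collar in which
discretized paths are rebuilt, and `n` the number of steps of the discretization. -/
lemma intrinsicHA_comp {X Y : Type*} [MetricSpace X] [MetricSpace Y] {p : X} {y : Y} {f : X → Y}
    {π : X → X} {R R' d δ e : ℝ} {n : ℕ} (hX : IsLengthSpace X) (hY : IsGeodesicSpace Y)
    (hf : IsPointedApprox e (2 * R) p y f)
    (hπ_id : ∀ x ∈ closedBall p (R - d), π x = x)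
    (hπ : ∀ x ∈ closedBall p (R + δ), π x ∈ closedBall p (R - d) ∧
      intrinsicEDist (closedBall p (R + δ)) x (π x) ≤ ENNReal.ofReal (R + δ - (R - d)))
    (hR' : ∀ v ∈ closedBall y (R - d / 2), ∀ w ∈ closedBall y (R - d / 2),
      intrinsicEDist (closedBall y R) v w ≤
        intrinsicEDist (closedBall y R') v w + ENNReal.ofReal d)
    (hdR : 2 * d ≤ R) (hδd : δ ≤ d) (hδR' : 2 * δ ≤ R' - R)
    (hn : 0 < n) (hnδ : 4 * R < n * δ) (he : 0 < e) (heδ : 12 * e ≤ δ) (hned : 4 * (n * e) ≤ d) :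
    IntrinsicHA (6 * d) (closedBall p (R + δ)) (closedBall y R) (f ∘ π) := by
  have h_mem : ∀ a ∈ closedBall p (R + δ), f (π a) ∈ closedBall y (R - d / 2) := fun a ha =>
    closedBall_subset_closedBall (by linarith)
      (hf.map_mem_closedBall (by linarith) (hπ a ha).1)
  have h_memR : ∀ a ∈ closedBall p (R + δ), f (π a) ∈ closedBall y R := fun a ha =>
    closedBall_subset_closedBall (by linarith) (h_mem a ha)
  have h_mesh : 2 * R / n < δ / 2 := by
    rw [div_lt_iff₀ (by positivity)]
    linarith
  have hC : 0 ≤ 2 * R := by linarith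
  have hne : 0 ≤ n * e := by positivity
  refine ⟨h_memR, fun b hb => ?_, fun a ha b hb => ⟨?_, ?_⟩⟩
  · obtain ⟨a, ha, hab⟩ := hf.exists_intrinsicEDist_map_le hY he.le (r := R - d) (by linarith)
      (by linarith) (by linarith) hb
    refine ⟨a, closedBall_subset_closedBall (by linarith) ha, ?_⟩
    rw [Function.comp_apply, hπ_id a ha]
    exact hab.trans (ENNReal.ofReal_le_ofReal (by linarith))
  · have h_diam := (hY.isLengthSpace.intrinsicEDist_closedBall_le_two_mul (R := R) (by linarith)
      (h_mem a ha) (h_mem b hb)).trans (ENNReal.ofReal_le_ofReal (by linarith : _ ≤ 2 * R))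
    have h_mem2R : ∀ x ∈ closedBall p (R + δ), π x ∈ closedBall p (2 * R) := fun x hx =>
      closedBall_subset_closedBall (by linarith) (hπ x hx).1
    exact le_add_ofReal_of_le_of_le (by linarith) (by positivity)
      (intrinsicEDist_le_add_two_mul (hπ a ha).2 (hπ b hb).2)
      (hf.intrinsicEDist_le_map hX he.le (by linarith) hn hC (by linarith) (h_mem2R a ha)
        (h_mem2R b hb) (h_memR a ha) (h_memR b hb) h_diam) (by linarith)
  · have h_diam := (hX.intrinsicEDist_closedBall_le_two_mul (R := R + δ) (by linarith)
      (hπ a ha).1 (hπ b hb).1).trans (ENNReal.ofReal_le_ofReal (by linarith : _ ≤ 2 * R))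
    have h_forward := hf.intrinsicEDist_map_le hY.isLengthSpace (R := R') (by linarith) hn hC
      (by linarith) h_diam
    have h_π := intrinsicEDist_le_add_two_mul (intrinsicEDist_comm.trans_le (hπ a ha).2)
      (intrinsicEDist_comm.trans_le (hπ b hb).2)
    exact le_add_ofReal_of_le_of_le (by linarith) (by linarith) (hR' _ (h_mem a ha) _ (h_mem b hb))
      (le_add_ofReal_of_le_of_le hne (by linarith) h_forward h_π le_rfl) (by linarith)

end IsPointedApprox

lemma exists_intrinsicHA_of_isPointedApprox {Y : Type*} [MetricSpace Y] [ProperSpace Y]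
    (hY : IsLengthSpace Y) (y : Y) {R ε : ℝ} (hR : 0 < R) (hε : 0 < ε) :
    ∃ δ ∈ Ioc 0 ε, ∃ e > 0, ∀ {X : Type*} [MetricSpace X], IsGeodesicSpace X →
      ∀ {p : X} {f : X → Y}, IsPointedApprox e (2 * R) p y f →
        ∃ F : X → Y, F p = y ∧ IntrinsicHA ε (closedBall p (R + δ)) (closedBall y R) F := by
  obtain ⟨d, hd, hd'⟩ := exists_between (show 0 < min (ε / 6) (R / 2) by positivity)
  obtain ⟨hdε, hdR⟩ := lt_min_iff.1 hd'
  obtain ⟨R', hRR', hR'⟩ := hY.exists_intrinsicEDist_le_add y (sub_lt_self R (half_pos hd)) hd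
  obtain ⟨δ, hδ, hδ'⟩ := exists_between (show 0 < min d ((R' - R) / 2) from
    lt_min hd (half_pos (sub_pos.2 hRR')))
  obtain ⟨hδd, hδR'⟩ := lt_min_iff.1 hδ'
  obtain ⟨n, hn⟩ := exists_nat_gt (4 * R / δ)
  have hn_pos : (0 : ℝ) < n := hn.trans' (by positivity)
  obtain ⟨e, he, he'⟩ := exists_between (show 0 < min (δ / 12) (d / (4 * n)) by positivity)
  obtain ⟨heδ, hed⟩ := lt_min_iff.1 he'
  refine ⟨δ, ⟨hδ, by linarith⟩, e, he, fun {X} _ hX {p f} hf => ?_⟩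
  obtain ⟨π, hπ_id, hπ⟩ := hX.exists_retraction p (show 0 ≤ R - d by linarith) (R + δ)
  refine ⟨f ∘ π, ?_, IntrinsicHA.mono (hf.intrinsicHA_comp hX.isLengthSpace hY.isGeodesicSpace
    hπ_id hπ hR' (by linarith) hδd.le (by linarith) (Nat.cast_pos.1 hn_pos)
    ((div_lt_iff₀ hδ).1 hn) he (by linarith) ?_) (by linarith)⟩
  · rw [Function.comp_apply, hπ_id p (mem_closedBall_self (by linarith)), hf.map_base]
  · rw [lt_div_iff₀ (by positivity)] at hed
    linarith

end IntrinsicBalls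

section Convergence

/-- Pointed Gromov–Hausdorff convergence in the sense of Burago–Burago–Ivanov, Definition 8.1.1:
for all `r, ε > 0`, eventually there are pointed `ε`-approximations of radius `r`. -/
def ConvergesPGHApprox (X : ℕ → PointedMetricSpace) (Y : PointedMetricSpace) : Prop :=
  ∀ r > 0, ∀ ε > 0, ∀ᶠ i in atTop, ∃ f : (X i).carrier → Y.carrier,
    IsPointedApprox ε r (X i).pt Y.pt f

variable {X : ℕ → PointedMetricSpace} {Y : PointedMetricSpace}

lemma ConvergesPGH.convergesPGHApprox (h : ConvergesPGH X Y) : ConvergesPGHApprox X Y :=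
  fun r hr ε hε => (eventually_atTop.2 (h r hr ε hε)).mono fun _ ⟨f, hp, hf⟩ =>
    ⟨f, hf.isPointedApprox hp (le_of_lt hε)⟩

lemma ConvergesPGHApprox.convergesPGH (hX : ∀ i, IsGeodesicSpace (X i).carrier)
    (hY : IsGeodesicSpace Y.carrier) (h : ConvergesPGHApprox X Y) : ConvergesPGH X Y := by
  intro R hR ε hε
  obtain ⟨e, he, he'⟩ := exists_between (show 0 < min (ε / 4) (R / 3) by positivity)
  obtain ⟨heε, heR⟩ := lt_min_iff.1 he'
  refine eventually_atTop.1 ((h R hR e he).mono fun i ⟨f, hf⟩ => ?_)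
  obtain ⟨F, hp, hF⟩ := hf.exists_restrictedHA (hX i) hY he (by linarith)
  exact ⟨F, hp, RestrictedHA.mono hF (by linarith)⟩

lemma ConvergesPGHIntrinsic.convergesPGHApprox (hX : ∀ i, IsLengthSpace (X i).carrier)
    (hY : IsLengthSpace Y.carrier) (h : ConvergesPGHIntrinsic X Y) : ConvergesPGHApprox X Y := by
  intro r hr ε hε
  obtain ⟨e, he, he'⟩ := exists_between (show 0 < min (ε / 2) (r / 2) by positivity)
  obtain ⟨heε, her⟩ := lt_min_iff.1 he'
  obtain ⟨ρ, hρ, h⟩ := h (4 * r) (by positivity)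
  filter_upwards [eventually_atTop.2 (h e he), hρ.eventually_const_lt (by linarith : 3 * r < 4 * r)]
    with i ⟨f, hp, hf⟩ hρi
  exact ⟨f, (hf.isPointedApprox (hX i) hY hp he.le hr.le hρi (by linarith)).mono (by linarith)⟩

lemma exists_tendsto_diagonal {Q : ℕ → ℕ → Prop} (h : ∀ k, ∀ᶠ i in atTop, Q k i) :
    ∃ κ : ℕ → ℕ, Tendsto κ atTop atTop ∧ ∀ᶠ i in atTop, Q (κ i) i := by
  classical
  choose N hN using fun k => eventually_atTop.1 (h k)
  refine ⟨fun i => Nat.findGreatest (fun k => N k ≤ i) i, tendsto_atTop.2 fun k => ?_, ?_⟩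
  · filter_upwards [eventually_ge_atTop k, eventually_ge_atTop (N k)] with i hki hNi
    exact Nat.le_findGreatest hki hNi
  · filter_upwards [eventually_ge_atTop (N 0)] with i hi
    exact hN _ i (Nat.findGreatest_spec (P := fun k => N k ≤ i) (Nat.zero_le i) hi)

lemma ConvergesPGHApprox.convergesPGHIntrinsic (hX : ∀ i, IsGeodesicSpace (X i).carrier)
    [ProperSpace Y.carrier] (hY : IsLengthSpace Y.carrier) (h : ConvergesPGHApprox X Y) :
    ConvergesPGHIntrinsic X Y := by
  intro R hR
  let ε : ℕ → ℝ := fun k => 1 / ((k : ℝ) + 1)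
  have hε : ∀ k, 0 < ε k := fun k => by positivity
  choose δ hδ e he h_approx using fun k => exists_intrinsicHA_of_isPointedApprox hY Y.pt hR (hε k)
  obtain ⟨κ, hκ, h_diag⟩ := exists_tendsto_diagonal fun k =>
    (h (2 * R) (by positivity) (e k) (he k)).mono fun i ⟨_, hf⟩ => h_approx k (hX i) hf
  have hεκ : Tendsto (ε ∘ κ) atTop (𝓝 0) := tendsto_one_div_add_atTop_nhds_zero_nat.comp hκ
  have hδκ : Tendsto (δ ∘ κ) atTop (𝓝 0) :=
    squeeze_zero (fun i => (hδ (κ i)).1.le) (fun i => (hδ (κ i)).2) hεκ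
  have hR_lim : Tendsto (fun i => R + δ (κ i)) atTop (𝓝 R) := by
    simpa only [add_zero, Function.comp_apply] using hδκ.const_add R
  refine ⟨fun i => R + δ (κ i), hR_lim, fun η hη => ?_⟩
  obtain ⟨N, hN⟩ := eventually_atTop.1 (h_diag.and (hεκ.eventually_le_const hη))
  refine ⟨N, fun i hi => ?_⟩
  obtain ⟨⟨F, hp, hF⟩, hi'⟩ := hN i hi
  exact ⟨F, hp, hF.mono hi'⟩

theorem pointedGH_definitions_equivalent_general (X : ℕ → PointedMetricSpace)
    (Y : PointedMetricSpace) (hX : ∀ i, IsGeodesicSpace (X i).carrier) [ProperSpace Y.carrier]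
    (hY : IsLengthSpace Y.carrier) :
    ConvergesPGH X Y ↔ ConvergesPGHIntrinsic X Y :=
  ⟨fun h => h.convergesPGHApprox.convergesPGHIntrinsic hX hY,
    fun h => (h.convergesPGHApprox (fun i => (hX i).isLengthSpace) hY).convergesPGH hX
      hY.isGeodesicSpace⟩

end Convergence

/-- For complete, locally compact (proper) length spaces, the two
definitions of pointed Gromov–Hausdorff convergence — convergence of closed `R`-balls
with restricted metrics, and convergence of closed `R_i`-balls (`R_i → R`) with
intrinsic metrics — are equivalent. -/
theorem pointedGH_definitions_equivalent
    (X : ℕ → PointedMetricSpace) (Y : PointedMetricSpace)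
    (hXlen : ∀ i, IsLengthSpace (X i).carrier)
    (hXproper : ∀ i, ProperSpace (X i).carrier)
    (hXcomplete : ∀ i, CompleteSpace (X i).carrier)
    (hYlen : IsLengthSpace Y.carrier)
    (hYproper : ProperSpace Y.carrier) (hYcomplete : CompleteSpace Y.carrier) :
    ConvergesPGH X Y ↔ ConvergesPGHIntrinsic X Y :=
  pointedGH_definitions_equivalent_general X Y (fun i => (hXlen i).isGeodesicSpace) hYlen
end
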